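/- Let K be a field, t ∈ K^× and κ ∈ Z^ℓ a multicharge, and suppose (K,t) separates Std(P_n). Then the cyclotomic Hecke algebra H = H_n(K,t,κ) decomposes as an internal direct sum of K-subspaces H = ⊕_λ ⊕_{s,t ∈ Std(λ)} H_{st}, where the outer sum is over all ℓ-multipartitions λ of n, H_{st} = { h ∈ H : L_r h = [c_r(s)]_t h and h L_r = [c_r(t)]_t h for all 1 ≤ r ≤ n }, and each subspace H_{st} is one-dimensional. -/

import Mathlib

open scoped BigOperators
open scoped Classical

namespace Paper

/-! ## Quantum integers -/

/-- The quantum integer `[d]_x` in a field, for `d ∈ ℤ`. -/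
noncomputable def qint {K : Type*} [Field K] (x : K) (d : ℤ) : K :=
  if 0 ≤ d then ∑ k ∈ Finset.range d.toNat, x ^ k
  else -∑ k ∈ Finset.range (-d).toNat, x ^ (-((k : ℤ) + 1))

/-- The quantum integer `[d]_t` in a commutative ring, for an invertible `t` and `d ∈ ℤ`. -/
def qintU {O : Type*} [CommRing O] (t : Oˣ) (d : ℤ) : O :=
  if 0 ≤ d then ∑ k ∈ Finset.range d.toNat, (t : O) ^ k
  else -∑ k ∈ Finset.range (-d).toNat, ((t ^ (-((k : ℤ) + 1)) : Oˣ) : O)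

/-! ## Nodes, multipartitions and standard tableaux -/

/-- A node `(l, r, c)`: component `l`, row `r`, column `c` (all `0`-based). -/
abbrev Node : Type := ℕ × ℕ × ℕ

/-- `nodeBelow A B` holds when `B` is strictly below `A`, i.e. `A < B` lexicographically. -/
def nodeBelow (A B : Node) : Prop :=
  A.1 < B.1 ∨ (A.1 = B.1 ∧ (A.2.1 < B.2.1 ∨ (A.2.1 = B.2.1 ∧ A.2.2 < B.2.2)))

/-- An `ℓ`-multipartition of `n`. -/
structure Multipartition (ℓ n : ℕ) : Type where
  part : ℕ → ℕ → ℕ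
  comp_bound : ∀ l, ℓ ≤ l → ∀ r, part l r = 0
  antitone : ∀ l, Antitone (part l)
  row_bound : ∀ l r, n ≤ r → part l r = 0
  size : (∑ l ∈ Finset.range ℓ, ∑ r ∈ Finset.range n, part l r) = n

/-- The diagram of a multipartition. -/
def Multipartition.diagram {ℓ n : ℕ} (μ : Multipartition ℓ n) : Set Node :=
  {A | A.2.2 < μ.part A.1 A.2.1}

/-- A standard tableau: a bijection from the diagram of its shape onto `{1, …, n}`
that increases along rows and down columns of each component (it takes the value
`0` off the diagram, so that it is determined by its entries). -/
structure StdTableau (ℓ n : ℕ) : Type where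
  shape : Multipartition ℓ n
  entry : Node → ℕ
  entry_zero : ∀ A, A ∉ shape.diagram → entry A = 0
  bijOn : Set.BijOn entry shape.diagram (Set.Icc 1 n)
  row_inc : ∀ l r c, (l, r, c + 1) ∈ shape.diagram → entry (l, r, c) < entry (l, r, c + 1)
  col_inc : ∀ l r c, (l, r + 1, c) ∈ shape.diagram → entry (l, r, c) < entry (l, r + 1, c)

/-- The node of a standard tableau containing the entry `k`. -/
noncomputable def StdTableau.node {ℓ n : ℕ} (T : StdTableau ℓ n) (k : ℕ) : Node :=
  Function.invFunOn T.entry T.shape.diagram k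

/-- The content `c_k(T) = κ_l + c - r` of the entry `k` in the tableau `T`
(`1 ≤ k ≤ n`). -/
noncomputable def content {ℓ n : ℕ} (κ : ℕ → ℤ) (T : StdTableau ℓ n) (k : ℕ) : ℤ :=
  κ (T.node k).1 + ((T.node k).2.2 : ℤ) - ((T.node k).2.1 : ℤ)

/-- The residue sequence of a standard tableau, in `I^n` with `I = ℤ/eℤ`. -/
noncomputable def resSeq {ℓ n : ℕ} (e : ℕ) (κ : ℕ → ℤ) (T : StdTableau ℓ n) :
    Fin n → ZMod e :=
  fun k => ((content κ T (k.1 + 1) : ℤ) : ZMod e)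

/-- The residue of a node. -/
def resNode (e : ℕ) (κ : ℕ → ℤ) (A : Node) : ZMod e :=
  ((κ A.1 + (A.2.2 : ℤ) - (A.2.1 : ℤ) : ℤ) : ZMod e)

/-- A set of nodes is the diagram of a multipartition (with at most `ℓ` components)
iff it is finite and downward closed in rows and columns. -/
def IsDiagramSet (ℓ : ℕ) (S : Set Node) : Prop :=
  S.Finite ∧ (∀ A ∈ S, A.1 < ℓ) ∧
    (∀ l r c, (l, r, c + 1) ∈ S → (l, r, c) ∈ S) ∧
    (∀ l r c, (l, r + 1, c) ∈ S → (l, r, c) ∈ S)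

/-- `A` is an addable node of the diagram `S`. -/
def Addable (ℓ : ℕ) (S : Set Node) (A : Node) : Prop :=
  A ∉ S ∧ IsDiagramSet ℓ (S ∪ {A})

/-- `A` is a removable node of the diagram `S`. -/
def Removable (ℓ : ℕ) (S : Set Node) (A : Node) : Prop :=
  A ∈ S ∧ IsDiagramSet ℓ (S \ {A})

/-- `d_A(S)`: the number of addable nodes of `S` of the same residue as `A` strictly
below `A`, minus the number of removable ones. -/
noncomputable def dNode (ℓ e : ℕ) (κ : ℕ → ℤ) (S : Set Node) (A : Node) : ℤ :=
  (Set.ncard {B | Addable ℓ S B ∧ resNode e κ B = resNode e κ A ∧ nodeBelow A B} : ℤ) -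
    (Set.ncard {B | Removable ℓ S B ∧ resNode e κ B = resNode e κ A ∧ nodeBelow A B} : ℤ)

/-- The Brundan–Kleshchev–Wang degree `deg_e(T)` of a standard tableau, written as the
telescoping sum of the recursion `deg_e(T) = deg_e(T↓(n-1)) + d_A(Shape(T))`. -/
noncomputable def degE {ℓ n : ℕ} (e : ℕ) (κ : ℕ → ℤ) (T : StdTableau ℓ n) : ℤ :=
  ∑ m ∈ Finset.Icc 1 n,
    dNode ℓ e κ {A | A ∈ T.shape.diagram ∧ T.entry A ≤ m} (T.node m)

/-- The restriction of the diagram of `T` to entries `≤ m` (the diagram of `Shape(T↓m)`). -/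
def restDiag {ℓ n : ℕ} (T : StdTableau ℓ n) (m : ℕ) : Set Node :=
  {A | A ∈ T.shape.diagram ∧ T.entry A ≤ m}

/-- Dominance order on standard tableaux: `domTab S T` iff `S ⊵ T`. -/
def domTab {ℓ n : ℕ} (S T : StdTableau ℓ n) : Prop :=
  ∀ m l i : ℕ,
    Set.ncard {A | A ∈ restDiag T m ∧ (A.1 < l ∨ (A.1 = l ∧ A.2.1 ≤ i))} ≤
      Set.ncard {A | A ∈ restDiag S m ∧ (A.1 < l ∨ (A.1 = l ∧ A.2.1 ≤ i))}

/-- Interchange the entries `r` and `r + 1` in an entry function. -/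
def swapEntry (f : Node → ℕ) (r : ℕ) : Node → ℕ :=
  fun A => if f A = r then r + 1 else if f A = r + 1 then r else f A

/-- `ρ_r(T) = c_r(T) - c_{r+1}(T)`, the axial distance. -/
noncomputable def rhoTab {ℓ n : ℕ} (κ : ℕ → ℤ) (T : StdTableau ℓ n) (r : ℕ) : ℤ :=
  content κ T r - content κ T (r + 1)

/-- The entry function of the row-reading initial tableau `t^λ`. -/
noncomputable def tlamEntry {ℓ n : ℕ} (μ : Multipartition ℓ n) (A : Node) : ℕ :=
  if A ∈ μ.diagram then
    (∑ l ∈ Finset.range A.1, ∑ r ∈ Finset.range n, μ.part l r) +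
      (∑ r ∈ Finset.range A.2.1, μ.part A.1 r) + A.2.2 + 1
  else 0

/-- The finite set of possible contents of standard tableaux of size `n`. -/
noncomputable def contFinset (ℓ n : ℕ) (κ : ℕ → ℤ) : Finset ℤ :=
  ((Finset.range ℓ ×ˢ Finset.range n ×ˢ Finset.range n).image
      (fun x => κ x.1 + (x.2.2 : ℤ) - (x.2.1 : ℤ))).filter
    (fun c => ∃ T : StdTableau ℓ n, ∃ k, 1 ≤ k ∧ k ≤ n ∧ content κ T k = c)

/-- The standard tableau (if any) obtained from `T` by interchanging the entries
`r` and `r + 1`; i.e. `T·s_r` if it is standard, and `none` otherwise. -/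
noncomputable def oSwapO {ℓ n : ℕ} (T : StdTableau ℓ n) (r : ℕ) :
    Option (StdTableau ℓ n) :=
  if h : ∃ V : StdTableau ℓ n, V.entry = swapEntry T.entry r then some (Classical.choose h)
  else none

/-- `oSwap` extended to `Option`. -/
noncomputable def oSwap {ℓ n : ℕ} (X : Option (StdTableau ℓ n)) (r : ℕ) :
    Option (StdTableau ℓ n) :=
  X.bind fun T => oSwapO T r

/-- Evaluate a seminormal coefficient system on an optional tableau (by `0` if none). -/
noncomputable def aE {ℓ n : ℕ} {K : Type*} [Field K] (α : ℕ → StdTableau ℓ n → K) (r : ℕ)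
    (X : Option (StdTableau ℓ n)) : K :=
  X.elim 0 (α r)

/-! ## Separation and idempotent subrings -/

/-- `(K, t)` separates `Std(P_n)` (field version):
`[n]!_t ∏_{1 ≤ l < m ≤ ℓ} ∏_{-n < d < n} [κ_l - κ_m + d]_t ≠ 0`. -/
def SeparatesF {K : Type*} [Field K] (t : Kˣ) (n ℓ : ℕ) (κ : ℕ → ℤ) : Prop :=
  ((∏ d ∈ Finset.Icc 1 n, qint (t : K) (d : ℤ)) *
      ∏ l ∈ Finset.range ℓ, ∏ m ∈ Finset.Ioo l ℓ,
        ∏ d ∈ Finset.Ioo (-(n : ℤ)) (n : ℤ), qint (t : K) (κ l - κ m + d)) ≠ 0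

/-- `(O, t)` separates `Std(P_n)` (subring version): the separation element is a unit. -/
def SeparatesU {O : Type*} [CommRing O] (t : Oˣ) (n ℓ : ℕ) (κ : ℕ → ℤ) : Prop :=
  IsUnit ((∏ d ∈ Finset.Icc 1 n, qintU t (d : ℤ)) *
      ∏ l ∈ Finset.range ℓ, ∏ m ∈ Finset.Ioo l ℓ,
        ∏ d ∈ Finset.Ioo (-(n : ℤ)) (n : ℤ), qintU t (κ l - κ m + d))

/-- `(O, t)` is an `e`-idempotent subring of the field `K`. -/
def IsIdempotentSubring {K : Type*} [Field K] (O : Subring K) (t : Oˣ) (e n ℓ : ℕ)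
    (κ : ℕ → ℤ) : Prop :=
  SeparatesU t n ℓ κ ∧
    (∀ k : ℤ, ¬(e : ℤ) ∣ k → IsUnit (qintU t k)) ∧
    (∀ k : ℤ, (e : ℤ) ∣ k → qintU t k ∈ Ideal.jacobson (⊥ : Ideal O))

/-! ## The cyclotomic Hecke algebra, by generators and relations -/

/-- Generators `L_1, …, L_n`, `T_1, …, T_{n-1}` (here `0`-based). -/
inductive HeckeGen (n : ℕ) : Type
  | L : Fin n → HeckeGen n
  | T : Fin (n - 1) → HeckeGen n

/-- The position `r` of the pair `(r, r+1)` interchanged by the `r`-th transposition. -/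
def pL {n : ℕ} (r : Fin (n - 1)) : Fin n := ⟨r.1, by have := r.2; omega⟩

/-- The position `r + 1` of the pair interchanged by the `r`-th transposition. -/
def pR {n : ℕ} (r : Fin (n - 1)) : Fin n := ⟨r.1 + 1, by have := r.2; omega⟩

/-- The position `r + 2`, used in braid relations. -/
def pM {n : ℕ} (r : Fin (n - 1)) (hr : r.1 + 1 < n - 1) : Fin n := ⟨r.1 + 2, by omega⟩

/-- The free algebra generator `L_k`. -/
def hL (R : Type*) [CommRing R] {n : ℕ} (k : Fin n) : FreeAlgebra R (HeckeGen n) :=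
  FreeAlgebra.ι R (HeckeGen.L k)

/-- The free algebra generator `T_r`. -/
def hT (R : Type*) [CommRing R] {n : ℕ} (r : Fin (n - 1)) : FreeAlgebra R (HeckeGen n) :=
  FreeAlgebra.ι R (HeckeGen.T r)

/-- The defining relations of the integral cyclotomic Hecke algebra `H_n(R, t, κ)`. -/
inductive HeckeRel (R : Type*) [CommRing R] (t : Rˣ) (n ℓ : ℕ) (κ : ℕ → ℤ) :
    FreeAlgebra R (HeckeGen n) → FreeAlgebra R (HeckeGen n) → Prop
  | cyc (h : 0 < n) :
      HeckeRel R t n ℓ κ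
        (((List.range ℓ).map fun l =>
          hL R (⟨0, h⟩ : Fin n) - algebraMap R _ (qintU t (κ l))).prod) 0
  | quad (r : Fin (n - 1)) :
      HeckeRel R t n ℓ κ ((hT R r + 1) * (hT R r - algebraMap R _ (t : R))) 0
  | LL (k m : Fin n) : HeckeRel R t n ℓ κ (hL R k * hL R m) (hL R m * hL R k)
  | TTfar (r s : Fin (n - 1)) (h : r.1 + 1 < s.1 ∨ s.1 + 1 < r.1) :
      HeckeRel R t n ℓ κ (hT R r * hT R s) (hT R s * hT R r)
  | braid (r s : Fin (n - 1)) (h : s.1 = r.1 + 1) :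
      HeckeRel R t n ℓ κ (hT R r * hT R s * hT R r) (hT R s * hT R r * hT R s)
  | TL (r : Fin (n - 1)) (k : Fin n) (h : k.1 ≠ r.1 ∧ k.1 ≠ r.1 + 1) :
      HeckeRel R t n ℓ κ (hT R r * hL R k) (hL R k * hT R r)
  | LT (r : Fin (n - 1)) :
      HeckeRel R t n ℓ κ (hL R (pR r) * (hT R r - algebraMap R _ (t : R) + 1))
        (hT R r * hL R (pL r) + 1)

/-- The integral cyclotomic Hecke algebra of type `A`, `H_n(R, t, κ)`. -/
noncomputable abbrev CycHecke (R : Type*) [CommRing R] (t : Rˣ) (n ℓ : ℕ) (κ : ℕ → ℤ) :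
    Type _ :=
  RingQuot (HeckeRel R t n ℓ κ)

/-- The generator `L_k` of the cyclotomic Hecke algebra. -/
noncomputable def Lgen (R : Type*) [CommRing R] (t : Rˣ) (n ℓ : ℕ) (κ : ℕ → ℤ)
    (k : Fin n) : CycHecke R t n ℓ κ :=
  RingQuot.mkAlgHom R (HeckeRel R t n ℓ κ) (hL R k)

/-- The generator `T_r` of the cyclotomic Hecke algebra. -/
noncomputable def Tgen (R : Type*) [CommRing R] (t : Rˣ) (n ℓ : ℕ) (κ : ℕ → ℤ)
    (r : Fin (n - 1)) : CycHecke R t n ℓ κ :=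
  RingQuot.mkAlgHom R (HeckeRel R t n ℓ κ) (hT R r)

end Paper
/-! ## Quiver Hecke (KLR) algebras, by generators and relations -/

namespace Paper

/-- Generators `e(i)` (`i ∈ I^n`), `ψ_1, …, ψ_{n-1}`, `y_1, …, y_n` (here `0`-based). -/
inductive KLRGen (n e : ℕ) : Type
  | idem : (Fin n → ZMod e) → KLRGen n e
  | psi : Fin (n - 1) → KLRGen n e
  | y : Fin n → KLRGen n e

/-- The free algebra generator `e(i)`. -/
def kE (R : Type*) [CommRing R] {n e : ℕ} (i : Fin n → ZMod e) :
    FreeAlgebra R (KLRGen n e) :=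
  FreeAlgebra.ι R (KLRGen.idem i)

/-- The free algebra generator `ψ_r`. -/
def kPsi (R : Type*) [CommRing R] {n e : ℕ} (r : Fin (n - 1)) :
    FreeAlgebra R (KLRGen n e) :=
  FreeAlgebra.ι R (KLRGen.psi r)

/-- The free algebra generator `y_k`. -/
def kY (R : Type*) [CommRing R] {n e : ℕ} (k : Fin n) : FreeAlgebra R (KLRGen n e) :=
  FreeAlgebra.ι R (KLRGen.y k)

/-- `s_r · i`: interchange the entries of `i` at positions `r` and `r + 1`. -/
def swapSeq {n e : ℕ} (i : Fin n → ZMod e) (r : Fin (n - 1)) : Fin n → ZMod e :=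
  fun k => if k = pL r then i (pR r) else if k = pR r then i (pL r) else i k

/-- The defining relations of the cyclotomic quiver Hecke algebra `R_n^Λ(R)` where
`Λ = Σ_l Λ_{κ_l mod e}`. -/
inductive KLRRel (R : Type*) [CommRing R] (n e ℓ : ℕ) [NeZero e] (κ : ℕ → ℤ) :
    FreeAlgebra R (KLRGen n e) → FreeAlgebra R (KLRGen n e) → Prop
  | cyc (h : 0 < n) (i : Fin n → ZMod e) :
      KLRRel R n e ℓ κ
        ((kY R (⟨0, h⟩ : Fin n)) ^
            (((Finset.range ℓ).filter fun l => ((κ l : ZMod e) = i ⟨0, h⟩)).card) *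
          kE R i) 0
  | orth (i j : Fin n → ZMod e) (h : i ≠ j) : KLRRel R n e ℓ κ (kE R i * kE R j) 0
  | idem (i : Fin n → ZMod e) : KLRRel R n e ℓ κ (kE R i * kE R i) (kE R i)
  | complete : KLRRel R n e ℓ κ (∑ i : Fin n → ZMod e, kE R i) 1
  | yE (k : Fin n) (i : Fin n → ZMod e) :
      KLRRel R n e ℓ κ (kY R k * kE R i) (kE R i * kY R k)
  | psiE (r : Fin (n - 1)) (i : Fin n → ZMod e) :
      KLRRel R n e ℓ κ (kPsi R r * kE R i) (kE R (swapSeq i r) * kPsi R r)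
  | yy (k m : Fin n) : KLRRel R n e ℓ κ (kY R k * kY R m) (kY R m * kY R k)
  | psiyEq (r : Fin (n - 1)) (i : Fin n → ZMod e) (h : i (pL r) = i (pR r)) :
      KLRRel R n e ℓ κ (kPsi R r * kY R (pR r) * kE R i)
        ((kY R (pL r) * kPsi R r + 1) * kE R i)
  | psiyNe (r : Fin (n - 1)) (i : Fin n → ZMod e) (h : i (pL r) ≠ i (pR r)) :
      KLRRel R n e ℓ κ (kPsi R r * kY R (pR r) * kE R i)
        (kY R (pL r) * kPsi R r * kE R i)
  | ypsiEq (r : Fin (n - 1)) (i : Fin n → ZMod e) (h : i (pL r) = i (pR r)) :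
      KLRRel R n e ℓ κ (kY R (pR r) * kPsi R r * kE R i)
        ((kPsi R r * kY R (pL r) + 1) * kE R i)
  | ypsiNe (r : Fin (n - 1)) (i : Fin n → ZMod e) (h : i (pL r) ≠ i (pR r)) :
      KLRRel R n e ℓ κ (kY R (pR r) * kPsi R r * kE R i)
        (kPsi R r * kY R (pL r) * kE R i)
  | psiyFar (r : Fin (n - 1)) (k : Fin n) (h : k.1 ≠ r.1 ∧ k.1 ≠ r.1 + 1) :
      KLRRel R n e ℓ κ (kPsi R r * kY R k) (kY R k * kPsi R r)
  | psipsiFar (r s : Fin (n - 1)) (h : r.1 + 1 < s.1 ∨ s.1 + 1 < r.1) :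
      KLRRel R n e ℓ κ (kPsi R r * kPsi R s) (kPsi R s * kPsi R r)
  | quadEq (r : Fin (n - 1)) (i : Fin n → ZMod e) (h : i (pL r) = i (pR r)) :
      KLRRel R n e ℓ κ (kPsi R r ^ 2 * kE R i) 0
  | quadR (r : Fin (n - 1)) (i : Fin n → ZMod e)
      (h1 : i (pR r) = i (pL r) + 1) (h2 : i (pL r) ≠ i (pR r) + 1) :
      KLRRel R n e ℓ κ (kPsi R r ^ 2 * kE R i) ((kY R (pL r) - kY R (pR r)) * kE R i)
  | quadL (r : Fin (n - 1)) (i : Fin n → ZMod e)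
      (h1 : i (pL r) = i (pR r) + 1) (h2 : i (pR r) ≠ i (pL r) + 1) :
      KLRRel R n e ℓ κ (kPsi R r ^ 2 * kE R i) ((kY R (pR r) - kY R (pL r)) * kE R i)
  | quadBoth (r : Fin (n - 1)) (i : Fin n → ZMod e)
      (h1 : i (pR r) = i (pL r) + 1) (h2 : i (pL r) = i (pR r) + 1) :
      KLRRel R n e ℓ κ (kPsi R r ^ 2 * kE R i)
        ((kY R (pR r) - kY R (pL r)) * (kY R (pL r) - kY R (pR r)) * kE R i)
  | quadNone (r : Fin (n - 1)) (i : Fin n → ZMod e) (h1 : i (pL r) ≠ i (pR r))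
      (h2 : i (pR r) ≠ i (pL r) + 1) (h3 : i (pL r) ≠ i (pR r) + 1) :
      KLRRel R n e ℓ κ (kPsi R r ^ 2 * kE R i) (kE R i)
  | braidR (r : Fin (n - 1)) (hr : r.1 + 1 < n - 1) (i : Fin n → ZMod e)
      (h0 : i (pM r hr) = i (pL r)) (h1 : i (pR r) = i (pL r) + 1)
      (h2 : i (pL r) ≠ i (pR r) + 1) :
      KLRRel R n e ℓ κ (kPsi R r * kPsi R ⟨r.1 + 1, hr⟩ * kPsi R r * kE R i)
        ((kPsi R ⟨r.1 + 1, hr⟩ * kPsi R r * kPsi R ⟨r.1 + 1, hr⟩ - 1) * kE R i)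
  | braidL (r : Fin (n - 1)) (hr : r.1 + 1 < n - 1) (i : Fin n → ZMod e)
      (h0 : i (pM r hr) = i (pL r)) (h1 : i (pL r) = i (pR r) + 1)
      (h2 : i (pR r) ≠ i (pL r) + 1) :
      KLRRel R n e ℓ κ (kPsi R r * kPsi R ⟨r.1 + 1, hr⟩ * kPsi R r * kE R i)
        ((kPsi R ⟨r.1 + 1, hr⟩ * kPsi R r * kPsi R ⟨r.1 + 1, hr⟩ + 1) * kE R i)
  | braidBoth (r : Fin (n - 1)) (hr : r.1 + 1 < n - 1) (i : Fin n → ZMod e)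
      (h0 : i (pM r hr) = i (pL r)) (h1 : i (pR r) = i (pL r) + 1)
      (h2 : i (pL r) = i (pR r) + 1) :
      KLRRel R n e ℓ κ (kPsi R r * kPsi R ⟨r.1 + 1, hr⟩ * kPsi R r * kE R i)
        ((kPsi R ⟨r.1 + 1, hr⟩ * kPsi R r * kPsi R ⟨r.1 + 1, hr⟩ +
            kY R (pL r) - 2 * kY R (pR r) + kY R (pM r hr)) * kE R i)
  | braidNone (r : Fin (n - 1)) (hr : r.1 + 1 < n - 1) (i : Fin n → ZMod e)
      (h : ¬(i (pM r hr) = i (pL r) ∧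
        (i (pR r) = i (pL r) + 1 ∨ i (pL r) = i (pR r) + 1))) :
      KLRRel R n e ℓ κ (kPsi R r * kPsi R ⟨r.1 + 1, hr⟩ * kPsi R r * kE R i)
        (kPsi R ⟨r.1 + 1, hr⟩ * kPsi R r * kPsi R ⟨r.1 + 1, hr⟩ * kE R i)

/-- The cyclotomic quiver Hecke algebra `R_n^Λ(R)`, `Λ = Σ_l Λ_{κ_l mod e}`. -/
noncomputable abbrev KLR (R : Type*) [CommRing R] (n e ℓ : ℕ) [NeZero e] (κ : ℕ → ℤ) :
    Type _ :=
  RingQuot (KLRRel R n e ℓ κ)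

/-- The generator `e(i)` of the cyclotomic quiver Hecke algebra. -/
noncomputable def KeGen (R : Type*) [CommRing R] (n e ℓ : ℕ) [NeZero e] (κ : ℕ → ℤ)
    (i : Fin n → ZMod e) : KLR R n e ℓ κ :=
  RingQuot.mkAlgHom R (KLRRel R n e ℓ κ) (kE R i)

/-- The generator `ψ_r` of the cyclotomic quiver Hecke algebra. -/
noncomputable def KpsiGen (R : Type*) [CommRing R] (n e ℓ : ℕ) [NeZero e] (κ : ℕ → ℤ)
    (r : Fin (n - 1)) : KLR R n e ℓ κ :=
  RingQuot.mkAlgHom R (KLRRel R n e ℓ κ) (kPsi R r)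

/-- The generator `y_k` of the cyclotomic quiver Hecke algebra. -/
noncomputable def KyGen (R : Type*) [CommRing R] (n e ℓ : ℕ) [NeZero e] (κ : ℕ → ℤ)
    (k : Fin n) : KLR R n e ℓ κ :=
  RingQuot.mkAlgHom R (KLRRel R n e ℓ κ) (kY R k)

end Paper
/-! ## The deformed cyclotomic quiver Hecke algebra -/

namespace Paper

/-- `y_k^⟨d⟩ = t^d y_k + [d]_t` in the free algebra. -/
def ydot (R : Type*) [CommRing R] (t : Rˣ) {n e : ℕ} (d : ℤ) (k : Fin n) :
    FreeAlgebra R (KLRGen n e) :=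
  algebraMap R _ ((t ^ d : Rˣ) : R) * kY R k + algebraMap R _ (qintU t d)

/-- `ρ_r(i) = î_r - î_{r+1}` for `i ∈ I^n`. -/
def rhoI {n e : ℕ} (i : Fin n → ZMod e) (r : Fin (n - 1)) : ℤ :=
  ((i (pL r)).val : ℤ) - ((i (pR r)).val : ℤ)

/-- The defining relations of the deformed cyclotomic quiver Hecke algebra `R_n(O)`. -/
inductive DefKLRRel (R : Type*) [CommRing R] (t : Rˣ) (n e ℓ : ℕ) [NeZero e] (κ : ℕ → ℤ) :
    FreeAlgebra R (KLRGen n e) → FreeAlgebra R (KLRGen n e) → Prop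
  | cyc (h : 0 < n) (i : Fin n → ZMod e) :
      DefKLRRel R t n e ℓ κ
        ((((List.range ℓ).map fun l =>
            if ((κ l : ZMod e) = i ⟨0, h⟩) then
              kY R (⟨0, h⟩ : Fin n) -
                algebraMap R _ (qintU t (κ l - ((i ⟨0, h⟩).val : ℤ)))
            else 1).prod) * kE R i) 0
  | orth (i j : Fin n → ZMod e) (h : i ≠ j) : DefKLRRel R t n e ℓ κ (kE R i * kE R j) 0
  | idem (i : Fin n → ZMod e) : DefKLRRel R t n e ℓ κ (kE R i * kE R i) (kE R i)
  | complete : DefKLRRel R t n e ℓ κ (∑ i : Fin n → ZMod e, kE R i) 1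
  | yE (k : Fin n) (i : Fin n → ZMod e) :
      DefKLRRel R t n e ℓ κ (kY R k * kE R i) (kE R i * kY R k)
  | psiE (r : Fin (n - 1)) (i : Fin n → ZMod e) :
      DefKLRRel R t n e ℓ κ (kPsi R r * kE R i) (kE R (swapSeq i r) * kPsi R r)
  | yy (k m : Fin n) : DefKLRRel R t n e ℓ κ (kY R k * kY R m) (kY R m * kY R k)
  | psiyEq (r : Fin (n - 1)) (i : Fin n → ZMod e) (h : i (pL r) = i (pR r)) :
      DefKLRRel R t n e ℓ κ (kPsi R r * kY R (pR r) * kE R i)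
        ((kY R (pL r) * kPsi R r + 1) * kE R i)
  | psiyNe (r : Fin (n - 1)) (i : Fin n → ZMod e) (h : i (pL r) ≠ i (pR r)) :
      DefKLRRel R t n e ℓ κ (kPsi R r * kY R (pR r) * kE R i)
        (kY R (pL r) * kPsi R r * kE R i)
  | ypsiEq (r : Fin (n - 1)) (i : Fin n → ZMod e) (h : i (pL r) = i (pR r)) :
      DefKLRRel R t n e ℓ κ (kY R (pR r) * kPsi R r * kE R i)
        ((kPsi R r * kY R (pL r) + 1) * kE R i)
  | ypsiNe (r : Fin (n - 1)) (i : Fin n → ZMod e) (h : i (pL r) ≠ i (pR r)) :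
      DefKLRRel R t n e ℓ κ (kY R (pR r) * kPsi R r * kE R i)
        (kPsi R r * kY R (pL r) * kE R i)
  | psiyFar (r : Fin (n - 1)) (k : Fin n) (h : k.1 ≠ r.1 ∧ k.1 ≠ r.1 + 1) :
      DefKLRRel R t n e ℓ κ (kPsi R r * kY R k) (kY R k * kPsi R r)
  | psipsiFar (r s : Fin (n - 1)) (h : r.1 + 1 < s.1 ∨ s.1 + 1 < r.1) :
      DefKLRRel R t n e ℓ κ (kPsi R r * kPsi R s) (kPsi R s * kPsi R r)
  | quadEq (r : Fin (n - 1)) (i : Fin n → ZMod e) (h : i (pL r) = i (pR r)) :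
      DefKLRRel R t n e ℓ κ (kPsi R r ^ 2 * kE R i) 0
  | quadR (r : Fin (n - 1)) (i : Fin n → ZMod e)
      (h1 : i (pR r) = i (pL r) + 1) (h2 : i (pL r) ≠ i (pR r) + 1) :
      DefKLRRel R t n e ℓ κ (kPsi R r ^ 2 * kE R i)
        ((ydot R t (1 + rhoI i r) (pL r) - kY R (pR r)) * kE R i)
  | quadL (r : Fin (n - 1)) (i : Fin n → ZMod e)
      (h1 : i (pL r) = i (pR r) + 1) (h2 : i (pR r) ≠ i (pL r) + 1) :
      DefKLRRel R t n e ℓ κ (kPsi R r ^ 2 * kE R i)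
        ((ydot R t (1 - rhoI i r) (pR r) - kY R (pL r)) * kE R i)
  | quadBoth (r : Fin (n - 1)) (i : Fin n → ZMod e)
      (h1 : i (pR r) = i (pL r) + 1) (h2 : i (pL r) = i (pR r) + 1) :
      DefKLRRel R t n e ℓ κ (kPsi R r ^ 2 * kE R i)
        ((ydot R t (1 + rhoI i r) (pL r) - kY R (pR r)) *
          (ydot R t (1 - rhoI i r) (pR r) - kY R (pL r)) * kE R i)
  | quadNone (r : Fin (n - 1)) (i : Fin n → ZMod e) (h1 : i (pL r) ≠ i (pR r))
      (h2 : i (pR r) ≠ i (pL r) + 1) (h3 : i (pL r) ≠ i (pR r) + 1) :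
      DefKLRRel R t n e ℓ κ (kPsi R r ^ 2 * kE R i) (kE R i)
  | braidBoth (r : Fin (n - 1)) (hr : r.1 + 1 < n - 1) (i : Fin n → ZMod e)
      (h0 : i (pM r hr) = i (pL r)) (h1 : i (pR r) = i (pL r) + 1)
      (h2 : i (pL r) = i (pR r) + 1) :
      DefKLRRel R t n e ℓ κ
        ((kPsi R r * kPsi R ⟨r.1 + 1, hr⟩ * kPsi R r -
            kPsi R ⟨r.1 + 1, hr⟩ * kPsi R r * kPsi R ⟨r.1 + 1, hr⟩) * kE R i)
        ((ydot R t (1 + rhoI i r) (pL r) + ydot R t (1 + rhoI i r) (pM r hr) -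
            ydot R t (1 + rhoI i r) (pR r) - ydot R t (1 - rhoI i r) (pR r)) * kE R i)
  | braidR (r : Fin (n - 1)) (hr : r.1 + 1 < n - 1) (i : Fin n → ZMod e)
      (h0 : i (pM r hr) = i (pL r)) (h1 : i (pR r) = i (pL r) + 1)
      (h2 : i (pL r) ≠ i (pR r) + 1) :
      DefKLRRel R t n e ℓ κ
        ((kPsi R r * kPsi R ⟨r.1 + 1, hr⟩ * kPsi R r -
            kPsi R ⟨r.1 + 1, hr⟩ * kPsi R r * kPsi R ⟨r.1 + 1, hr⟩) * kE R i)
        (algebraMap R _ (-(((t ^ (1 + rhoI i r) : Rˣ) : R))) * kE R i)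
  | braidL (r : Fin (n - 1)) (hr : r.1 + 1 < n - 1) (i : Fin n → ZMod e)
      (h0 : i (pM r hr) = i (pL r)) (h1 : i (pL r) = i (pR r) + 1)
      (h2 : i (pR r) ≠ i (pL r) + 1) :
      DefKLRRel R t n e ℓ κ
        ((kPsi R r * kPsi R ⟨r.1 + 1, hr⟩ * kPsi R r -
            kPsi R ⟨r.1 + 1, hr⟩ * kPsi R r * kPsi R ⟨r.1 + 1, hr⟩) * kE R i)
        (kE R i)
  | braidNone (r : Fin (n - 1)) (hr : r.1 + 1 < n - 1) (i : Fin n → ZMod e)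
      (h : ¬(i (pM r hr) = i (pL r) ∧
        (i (pR r) = i (pL r) + 1 ∨ i (pL r) = i (pR r) + 1))) :
      DefKLRRel R t n e ℓ κ
        ((kPsi R r * kPsi R ⟨r.1 + 1, hr⟩ * kPsi R r -
            kPsi R ⟨r.1 + 1, hr⟩ * kPsi R r * kPsi R ⟨r.1 + 1, hr⟩) * kE R i) 0

/-- The deformed cyclotomic quiver Hecke algebra `R_n(R)`. -/
noncomputable abbrev DefKLR (R : Type*) [CommRing R] (t : Rˣ) (n e ℓ : ℕ) [NeZero e]
    (κ : ℕ → ℤ) : Type _ :=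
  RingQuot (DefKLRRel R t n e ℓ κ)

/-- The generator `f_i` of the deformed cyclotomic quiver Hecke algebra. -/
noncomputable def DfGen (R : Type*) [CommRing R] (t : Rˣ) (n e ℓ : ℕ) [NeZero e]
    (κ : ℕ → ℤ) (i : Fin n → ZMod e) : DefKLR R t n e ℓ κ :=
  RingQuot.mkAlgHom R (DefKLRRel R t n e ℓ κ) (kE R i)

/-- The generator `ψ_r` of the deformed cyclotomic quiver Hecke algebra. -/
noncomputable def DpsiGen (R : Type*) [CommRing R] (t : Rˣ) (n e ℓ : ℕ) [NeZero e]
    (κ : ℕ → ℤ) (r : Fin (n - 1)) : DefKLR R t n e ℓ κ :=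
  RingQuot.mkAlgHom R (DefKLRRel R t n e ℓ κ) (kPsi R r)

/-- The generator `y_k` of the deformed cyclotomic quiver Hecke algebra. -/
noncomputable def DyGen (R : Type*) [CommRing R] (t : Rˣ) (n e ℓ : ℕ) [NeZero e]
    (κ : ℕ → ℤ) (k : Fin n) : DefKLR R t n e ℓ κ :=
  RingQuot.mkAlgHom R (DefKLRRel R t n e ℓ κ) (kY R k)

/-! ## Seminormal idempotents -/

/-- The seminormal idempotent `F_T` of the semisimple cyclotomic Hecke algebra:
`F_T = ∏_{k=1}^n ∏_{c ∈ Cont(n), [c_k(T)] ≠ [c]} (L_k - [c]) / ([c_k(T)] - [c])`. -/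
noncomputable def Fidem (K : Type*) [Field K] (tK : Kˣ) (n ℓ : ℕ) (κ : ℕ → ℤ)
    (T : StdTableau ℓ n) : CycHecke K tK n ℓ κ :=
  ((List.finRange n).map (fun k =>
    (((contFinset ℓ n κ).sort (· ≤ ·)).map (fun c =>
      if qint (tK : K) (content κ T (k.1 + 1)) ≠ qint (tK : K) c then
        (Lgen K tK n ℓ κ k - algebraMap K _ (qint (tK : K) c)) *
          algebraMap K _ ((qint (tK : K) (content κ T (k.1 + 1)) - qint (tK : K) c)⁻¹)
      else 1)).prod)).prod

/-- The residue idempotent `f_i = Σ_{T ∈ Std(i)} F_T`. -/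
noncomputable def fres (K : Type*) [Field K] (tK : Kˣ) (n ℓ e : ℕ) (κ : ℕ → ℤ)
    (i : Fin n → ZMod e) : CycHecke K tK n ℓ κ :=
  ∑ᶠ T : {T : StdTableau ℓ n // resSeq e κ T = i}, Fidem K tK n ℓ κ T.1

/-- The simultaneous two-sided eigenspace `H_{S,T}` of the Jucys–Murphy elements. -/
noncomputable def eigSub (K : Type*) [Field K] (tK : Kˣ) (n ℓ : ℕ) (κ : ℕ → ℤ)
    (S T : StdTableau ℓ n) : Submodule K (CycHecke K tK n ℓ κ) where
  carrier := {h | ∀ k : Fin n,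
      Lgen K tK n ℓ κ k * h = qint (tK : K) (content κ S (k.1 + 1)) • h ∧
      h * Lgen K tK n ℓ κ k = qint (tK : K) (content κ T (k.1 + 1)) • h}
  add_mem' := by
    intro a b ha hb
    intro k
    obtain ⟨h1, h2⟩ := ha k
    obtain ⟨h3, h4⟩ := hb k
    exact ⟨by rw [mul_add, h1, h3, smul_add], by rw [add_mul, h2, h4, smul_add]⟩
  zero_mem' := by intro k; simp
  smul_mem' := by
    intro c a ha
    intro k
    obtain ⟨h1, h2⟩ := ha k
    constructor
    · rw [mul_smul_comm, h1, smul_comm]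
    · rw [smul_mul_assoc, h2, smul_comm]

end Paper

open scoped BigOperators
open scoped Classical

namespace Paper

/-! ## Quantum integers: basic identities -/

section qintLemmas

variable {K : Type*} [Field K]

lemma qint_nat (x : K) (m : ℕ) : qint x (m : ℤ) = ∑ k ∈ Finset.range m, x ^ k := by
  simp [qint]

lemma qint_neg_nat (x : K) (m : ℕ) :
    qint x (-(m : ℤ)) = -∑ k ∈ Finset.range m, x ^ (-((k : ℤ) + 1)) := by
  rcases Nat.eq_zero_or_pos m with rfl | h
  · simp [qint]
  · have h' : ¬ (0 : ℤ) ≤ -(m : ℤ) := by omega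
    rw [qint, if_neg h']
    simp

lemma qint_zero (x : K) : qint x 0 = 0 := by
  simp [qint]

lemma qint_succ (x : K) (hx : x ≠ 0) (d : ℤ) : qint x (d + 1) = x * qint x d + 1 := by
  rcases lt_or_ge d 0 with h | h
  · obtain ⟨m, rfl⟩ : ∃ m : ℕ, d = -((m + 1 : ℕ) : ℤ) := ⟨(-d - 1).toNat, by omega⟩
    have e : -((m + 1 : ℕ) : ℤ) + 1 = -(m : ℤ) := by push_cast; ring
    rw [e, qint_neg_nat, qint_neg_nat, Finset.sum_range_succ', mul_neg, mul_add, Finset.mul_sum]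
    have : ∀ k ∈ Finset.range m, x * x ^ (-(((k + 1 : ℕ) : ℤ) + 1)) = x ^ (-((k : ℤ) + 1)) := by
      intro k _
      rw [← zpow_one_add₀ hx]
      congr 1
    rw [Finset.sum_congr rfl this]
    simp [hx]
  · obtain ⟨m, rfl⟩ := Int.eq_ofNat_of_zero_le h
    have e : (m : ℤ) + 1 = ((m + 1 : ℕ) : ℤ) := by push_cast; ring
    rw [e, qint_nat, qint_nat, Finset.sum_range_succ', Finset.mul_sum]
    simp [pow_succ']

lemma qint_pow (x : K) (hx : x ≠ 0) (d : ℤ) : 1 + (x - 1) * qint x d = x ^ d := by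
  induction d using Int.induction_on with
  | zero => simp [qint_zero]
  | succ i ih =>
    rw [qint_succ x hx, zpow_add_one₀ hx, ← ih]; ring
  | pred i ih =>
    have := qint_succ x hx (-(i : ℤ) - 1)
    rw [sub_add_cancel] at this
    rw [this] at ih
    rw [zpow_sub_one₀ hx, ← ih]
    field_simp
    ring

lemma qint_add (x : K) (hx : x ≠ 0) (d e : ℤ) :
    qint x (d + e) = qint x d + x ^ d * qint x e := by
  induction e using Int.induction_on with
  | zero => simp [qint_zero]
  | succ i ih =>
    rw [← add_assoc, qint_succ x hx, qint_succ x hx i, ih, ← qint_pow x hx d]; ring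
  | pred i ih =>
    have h1 := qint_succ x hx (-(i : ℤ) - 1)
    have h2 := qint_succ x hx (d + (-(i : ℤ) - 1))
    rw [sub_add_cancel] at h1
    have e : d + (-(i : ℤ) - 1) + 1 = d + -(i : ℤ) := by ring
    rw [e, ih, h1] at h2
    have h3 := qint_pow x hx d
    apply mul_left_cancel₀ hx
    linear_combination -h2 - h3

lemma qint_neg (x : K) (hx : x ≠ 0) (d : ℤ) : qint x (-d) = - x ^ (-d) * qint x d := by
  have := qint_add x hx (-d) d
  rw [neg_add_cancel, qint_zero] at this
  linear_combination -this

lemma qint_eq_iff (x : K) (hx : x ≠ 0) (c d : ℤ) :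
    qint x c = qint x d ↔ qint x (c - d) = 0 := by
  have := qint_add x hx d (c - d)
  rw [add_sub_cancel] at this
  rw [this]
  constructor
  · intro h
    have h' : x ^ d * qint x (c - d) = 0 := by linear_combination h
    rcases mul_eq_zero.1 h' with h0 | h0
    · exact absurd h0 (zpow_ne_zero _ hx)
    · exact h0
  · intro h; rw [h]; ring

lemma qintU_eq (t : Kˣ) (d : ℤ) : qintU t d = qint (t : K) d := by
  simp only [qintU, qint, Units.val_zpow_eq_zpow_val]

variable {t : Kˣ} {n ℓ : ℕ} {κ : ℕ → ℤ}

lemma sep_same (h : SeparatesF t n ℓ κ) (d : ℤ) (h0 : d ≠ 0) (h1 : d ≤ n) (h2 : -d ≤ n) :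
    qint (t : K) d ≠ 0 := by
  have key : ∀ m : ℕ, 1 ≤ m → m ≤ n → qint (t : K) (m : ℤ) ≠ 0 := by
    intro m hm1 hm2
    have := left_ne_zero_of_mul h
    rw [Finset.prod_ne_zero_iff] at this
    exact this m (Finset.mem_Icc.2 ⟨hm1, hm2⟩)
  rcases lt_or_ge d 0 with hd | hd
  · obtain ⟨m, rfl⟩ : ∃ m : ℕ, d = -(m : ℤ) := ⟨(-d).toNat, by omega⟩
    rw [qint_neg _ t.ne_zero]
    exact mul_ne_zero (neg_ne_zero.2 (zpow_ne_zero _ t.ne_zero)) (key m (by omega) (by omega))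
  · obtain ⟨m, rfl⟩ := Int.eq_ofNat_of_zero_le hd
    exact key m (by omega) (by omega)

lemma sep_diff (h : SeparatesF t n ℓ κ) (l m : ℕ) (hl : l < ℓ) (hm : m < ℓ) (hlm : l ≠ m)
    (d : ℤ) (h1 : d < n) (h2 : -d < n) : qint (t : K) (κ l - κ m + d) ≠ 0 := by
  have key : ∀ l m : ℕ, l < ℓ → m < ℓ → l < m → ∀ d : ℤ, d < n → -d < n →
      qint (t : K) (κ l - κ m + d) ≠ 0 := by
    intro l m hl hm hlm d h1 h2
    have := right_ne_zero_of_mul h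
    rw [Finset.prod_ne_zero_iff] at this
    have := this l (Finset.mem_range.2 hl)
    rw [Finset.prod_ne_zero_iff] at this
    have := this m (Finset.mem_Ioo.2 ⟨hlm, hm⟩)
    rw [Finset.prod_ne_zero_iff] at this
    exact this d (Finset.mem_Ioo.2 ⟨by omega, by omega⟩)
  rcases Nat.lt_or_gt_of_ne hlm with hh | hh
  · exact key l m hl hm hh d h1 h2
  · have e : κ l - κ m + d = -(κ m - κ l + -d) := by ring
    rw [e, qint_neg _ t.ne_zero]
    exact mul_ne_zero (neg_ne_zero.2 (zpow_ne_zero _ t.ne_zero))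
      (key m l hm hl hh _ (by omega) (by omega))

end qintLemmas

/-! ## Separation of nodes -/

/-- `Γ` contains the strict arm and leg (to the left and above) of the node `A`. -/
def HasArms (Γ : Finset Node) (A : Node) : Prop :=
  (∀ j, j < A.2.2 → (A.1, A.2.1, j) ∈ Γ) ∧ (∀ i, i < A.2.1 → (A.1, i, A.2.2) ∈ Γ)

/-- The left arm of a node. -/
def armSet (A : Node) : Finset Node := (Finset.range A.2.2).image fun j => (A.1, A.2.1, j)

/-- The upper leg of a node. -/
def legSet (A : Node) : Finset Node := (Finset.range A.2.1).image fun i => (A.1, i, A.2.2)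

lemma card_armSet (A : Node) : (armSet A).card = A.2.2 := by
  rw [armSet, Finset.card_image_of_injective, Finset.card_range]
  intro a b h; simpa using h

lemma card_legSet (A : Node) : (legSet A).card = A.2.1 := by
  rw [legSet, Finset.card_image_of_injective, Finset.card_range]
  intro a b h; simpa using h

lemma HasArms.arm {Γ : Finset Node} {A : Node} (h : HasArms Γ A) : armSet A ⊆ Γ := by
  intro x hx
  simp only [armSet, Finset.mem_image, Finset.mem_range] at hx
  obtain ⟨j, hj, rfl⟩ := hx
  exact h.1 j hj

lemma HasArms.leg {Γ : Finset Node} {A : Node} (h : HasArms Γ A) : legSet A ⊆ Γ := by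
  intro x hx
  simp only [legSet, Finset.mem_image, Finset.mem_range] at hx
  obtain ⟨j, hj, rfl⟩ := hx
  exact h.2 j hj

lemma disj_arm_leg (A : Node) : Disjoint (armSet A) (legSet A) := by
  rw [Finset.disjoint_left]
  intro x h1 h2
  simp only [armSet, legSet, Finset.mem_image, Finset.mem_range] at h1 h2
  obtain ⟨j, hj, rfl⟩ := h1
  obtain ⟨i, hi, h⟩ := h2
  simp only [Prod.mk.injEq] at h
  omega

lemma arms_diff {Γ : Finset Node} {A B : Node} (hA : HasArms Γ A) (hB : HasArms Γ B)
    (h : A.1 ≠ B.1) : A.2.1 + A.2.2 + (B.2.1 + B.2.2) ≤ Γ.card := by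
  have hd : Disjoint (armSet A ∪ legSet A) (armSet B ∪ legSet B) := by
    rw [Finset.disjoint_left]
    intro x h1 h2
    simp only [armSet, legSet, Finset.mem_union, Finset.mem_image, Finset.mem_range] at h1 h2
    have e1 : x.1 = A.1 := by rcases h1 with ⟨_, _, rfl⟩ | ⟨_, _, rfl⟩ <;> rfl
    have e2 : x.1 = B.1 := by rcases h2 with ⟨_, _, rfl⟩ | ⟨_, _, rfl⟩ <;> rfl
    exact h (e1.symm.trans e2)
  have := Finset.card_le_card (Finset.union_subset (Finset.union_subset hA.arm hA.leg)
    (Finset.union_subset hB.arm hB.leg))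
  rw [Finset.card_union_of_disjoint hd, Finset.card_union_of_disjoint (disj_arm_leg A),
    Finset.card_union_of_disjoint (disj_arm_leg B), card_armSet, card_armSet, card_legSet,
    card_legSet] at this
  omega

lemma arms_same {Γ : Finset Node} {A B : Node} (hA : HasArms Γ A) (hB : HasArms Γ B) :
    A.2.2 + B.2.1 ≤ Γ.card + 1 := by
  have h1 := Finset.card_union_add_card_inter (armSet A) (legSet B)
  have h2 := Finset.card_le_card (Finset.union_subset hA.arm hB.leg)
  have h3 : (armSet A ∩ legSet B).card ≤ 1 := by
    rw [Finset.card_le_one]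
    intro x hx y hy
    simp only [armSet, legSet, Finset.mem_inter, Finset.mem_image, Finset.mem_range] at hx hy
    obtain ⟨⟨j, _, rfl⟩, ⟨i, _, h⟩⟩ := hx
    obtain ⟨⟨j', _, rfl⟩, ⟨i', _, h'⟩⟩ := hy
    simp only [Prod.mk.injEq] at h h' ⊢
    exact ⟨trivial, trivial, by omega⟩
  rw [card_armSet, card_legSet] at h1
  omega

/-- The content of a node. -/
def ncont (κ : ℕ → ℤ) (A : Node) : ℤ := κ A.1 + (A.2.2 : ℤ) - (A.2.1 : ℤ)

lemma sep_nodes {K : Type*} [Field K] {t : Kˣ} {n ℓ : ℕ} {κ : ℕ → ℤ}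
    (h : SeparatesF t n ℓ κ) {Γ : Finset Node} {A B : Node} (hA : HasArms Γ A)
    (hB : HasArms Γ B) (hAl : A.1 < ℓ) (hBl : B.1 < ℓ) (e : ℤ)
    (h1 : (Γ.card : ℤ) + e + 1 ≤ n) (h2 : (Γ.card : ℤ) - e + 1 ≤ n)
    (hq : qint (t : K) (ncont κ A) = qint (t : K) (ncont κ B + e)) :
    A.1 = B.1 ∧ (A.2.2 : ℤ) - A.2.1 = (B.2.2 : ℤ) - B.2.1 + e := by
  rw [qint_eq_iff _ t.ne_zero] at hq
  have hAB : A.1 = B.1 := by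
    by_contra hne
    have := arms_diff hA hB hne
    have e' : ncont κ A - (ncont κ B + e) = κ A.1 - κ B.1 +
        ((A.2.2 : ℤ) - A.2.1 - ((B.2.2 : ℤ) - B.2.1 + e)) := by
      simp only [ncont]; ring
    rw [e'] at hq
    exact sep_diff h _ _ hAl hBl hne _ (by omega) (by omega) hq
  refine ⟨hAB, ?_⟩
  by_contra hne
  have g1 := arms_same hA hB
  have g2 := arms_same hB hA
  have e' : ncont κ A - (ncont κ B + e) =
      ((A.2.2 : ℤ) - A.2.1 - ((B.2.2 : ℤ) - B.2.1 + e)) := by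
    simp only [ncont, hAB]; ring
  rw [e'] at hq
  exact sep_same h _ (by omega) (by omega) (by omega) hq

end Paper

open scoped BigOperators
open scoped Classical

namespace Paper

/-! ## Basic facts on standard tableaux -/

namespace StdTableau

variable {ℓ n : ℕ} (T : StdTableau ℓ n)

lemma mem_diag_iff (A : Node) : A ∈ T.shape.diagram ↔ 1 ≤ T.entry A := by
  constructor
  · intro h
    exact (T.bijOn.mapsTo h).1
  · intro h
    by_contra hA
    have := T.entry_zero A hA
    omega

lemma entry_le_n (A : Node) : T.entry A ≤ n := by
  by_cases h : A ∈ T.shape.diagram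
  · exact (T.bijOn.mapsTo h).2
  · rw [T.entry_zero A h]; omega

lemma node_spec {k : ℕ} (h1 : 1 ≤ k) (h2 : k ≤ n) :
    T.node k ∈ T.shape.diagram ∧ T.entry (T.node k) = k := by
  have h : ∃ a ∈ T.shape.diagram, T.entry a = k := T.bijOn.surjOn ⟨h1, h2⟩
  exact ⟨Function.invFunOn_mem h, Function.invFunOn_eq h⟩

lemma entry_node {k : ℕ} (h1 : 1 ≤ k) (h2 : k ≤ n) : T.entry (T.node k) = k :=
  (T.node_spec h1 h2).2

lemma node_entry {A : Node} (h : A ∈ T.shape.diagram) : T.node (T.entry A) = A := by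
  have h1 := T.bijOn.mapsTo h
  have := T.node_spec h1.1 h1.2
  exact T.bijOn.injOn this.1 h this.2

lemma node_eq {A : Node} {k : ℕ} (h1 : 1 ≤ k) (h : T.entry A = k) : T.node k = A := by
  subst h
  exact T.node_entry ((T.mem_diag_iff A).2 h1)

lemma diag_lower {l r c r' c' : ℕ} (h : (l, r, c) ∈ T.shape.diagram) (hr : r' ≤ r)
    (hc : c' ≤ c) : (l, r', c') ∈ T.shape.diagram := by
  have h1 := T.shape.antitone l hr
  simp only [Multipartition.diagram, Set.mem_ofPred_eq] at h ⊢
  omega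

lemma entry_row {l r c : ℕ} (d : ℕ) (h : (l, r, c + d) ∈ T.shape.diagram) :
    T.entry (l, r, c) + d ≤ T.entry (l, r, c + d) := by
  induction d with
  | zero => simp
  | succ d ih =>
    have h1 := ih (T.diag_lower h le_rfl (by omega))
    have h2 := T.row_inc l r (c + d) h
    have e : T.entry (l, r, c + (d + 1)) = T.entry (l, r, c + d + 1) := rfl
    omega

lemma entry_col {l r c : ℕ} (d : ℕ) (h : (l, r + d, c) ∈ T.shape.diagram) :
    T.entry (l, r, c) + d ≤ T.entry (l, r + d, c) := by
  induction d with
  | zero => simp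
  | succ d ih =>
    have h1 := ih (T.diag_lower h (by omega) le_rfl)
    have h2 := T.col_inc l (r + d) c h
    have e : T.entry (l, r + (d + 1), c) = T.entry (l, r + d + 1, c) := rfl
    omega

lemma entry_mono {l r c r' c' : ℕ} (h : (l, r, c) ∈ T.shape.diagram) (hr : r' ≤ r)
    (hc : c' ≤ c) : T.entry (l, r', c') + (r - r') + (c - c') ≤ T.entry (l, r, c) := by
  obtain ⟨d, rfl⟩ := Nat.exists_eq_add_of_le hr
  obtain ⟨e, rfl⟩ := Nat.exists_eq_add_of_le hc
  have h1 := T.entry_row e h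
  have h2 := T.entry_col (l := l) (r := r') (c := c') d (T.diag_lower h le_rfl (by omega))
  omega

lemma comp_lt {A : Node} (h : A ∈ T.shape.diagram) : A.1 < ℓ := by
  by_contra hA
  have := T.shape.comp_bound A.1 (by omega) A.2.1
  simp only [Multipartition.diagram, Set.mem_ofPred_eq] at h
  omega

lemma diag_bound {A : Node} (h : A ∈ T.shape.diagram) : A.2.1 < n ∧ A.2.2 < n := by
  obtain ⟨l, r, c⟩ := A
  have h1 := T.entry_mono h (Nat.zero_le r) (Nat.zero_le c)
  have h2 := (T.mem_diag_iff _).1 (T.diag_lower h (Nat.zero_le r) (Nat.zero_le c))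
  have h3 := T.entry_le_n (l, r, c)
  simp only
  omega

/-- The set of nodes with entry less than `k`. -/
noncomputable def below (k : ℕ) : Finset Node := (Finset.Icc 1 (k - 1)).image T.node

lemma card_below (k : ℕ) : (T.below k).card ≤ k - 1 := by
  have := Finset.card_image_le (s := Finset.Icc 1 (k - 1)) (f := T.node)
  simpa [below] using this

lemma mem_below {A : Node} {k : ℕ} (h1 : 1 ≤ T.entry A) (h2 : T.entry A < k) :
    A ∈ T.below k := by
  rw [below, Finset.mem_image]
  exact ⟨T.entry A, Finset.mem_Icc.2 ⟨h1, by omega⟩, T.node_eq h1 rfl⟩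

lemma hasArms {A : Node} {k : ℕ} (hA : A ∈ T.shape.diagram) (h : T.entry A ≤ k) :
    HasArms (T.below k) A := by
  obtain ⟨l, r, c⟩ := A
  constructor
  · intro j hj
    simp only at hj ⊢
    have := T.entry_mono hA le_rfl hj.le
    exact T.mem_below ((T.mem_diag_iff _).1 (T.diag_lower hA le_rfl hj.le)) (by omega)
  · intro j hj
    simp only at hj ⊢
    have := T.entry_mono hA hj.le le_rfl
    exact T.mem_below ((T.mem_diag_iff _).1 (T.diag_lower hA hj.le le_rfl)) (by omega)

variable {T}

lemma ext_entry {S T : StdTableau ℓ n} (h : S.entry = T.entry) : S = T := by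
  have hd : S.shape.diagram = T.shape.diagram := by
    ext A; rw [S.mem_diag_iff, T.mem_diag_iff, h]
  have hp : S.shape.part = T.shape.part := by
    funext l r
    have key : ∀ c, c < S.shape.part l r ↔ c < T.shape.part l r := by
      intro c
      have : (l, r, c) ∈ S.shape.diagram ↔ (l, r, c) ∈ T.shape.diagram := by rw [hd]
      exact this
    have h1 := key (S.shape.part l r)
    have h2 := key (T.shape.part l r)
    omega
  obtain ⟨⟨p, _, _, _, _⟩, e, _, _, _, _⟩ := S
  obtain ⟨⟨p', _, _, _, _⟩, e', _, _, _, _⟩ := T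
  simp only at h hp
  subst h
  subst hp
  rfl

lemma shape_eq_of_diag {S T : StdTableau ℓ n} (hd : S.shape.diagram = T.shape.diagram) :
    S.shape = T.shape := by
  have hp : S.shape.part = T.shape.part := by
    funext l r
    have key : ∀ c, c < S.shape.part l r ↔ c < T.shape.part l r := by
      intro c
      have : (l, r, c) ∈ S.shape.diagram ↔ (l, r, c) ∈ T.shape.diagram := by rw [hd]
      exact this
    have h1 := key (S.shape.part l r)
    have h2 := key (T.shape.part l r)
    omega
  generalize S.shape = s at hp ⊢
  generalize T.shape = s' at hp ⊢
  cases s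
  cases s'
  simp only at hp
  subst hp
  rfl

lemma ext_node {S T : StdTableau ℓ n} (h : ∀ k, 1 ≤ k → k ≤ n → S.node k = T.node k) :
    S = T := by
  apply ext_entry
  have key : ∀ S T : StdTableau ℓ n, (∀ k, 1 ≤ k → k ≤ n → S.node k = T.node k) →
      ∀ A, 1 ≤ S.entry A → T.entry A = S.entry A := by
    intro S T h A hA
    have h1 := h _ hA (S.entry_le_n A)
    rw [S.node_eq hA rfl] at h1
    conv_lhs => rw [h1]
    exact T.entry_node hA (S.entry_le_n A)
  funext A
  by_cases h1 : 1 ≤ S.entry A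
  · exact (key S T h A h1).symm
  · by_cases h2 : 1 ≤ T.entry A
    · exact key T S (fun k a b => (h k a b).symm) A h2
    · omega

noncomputable instance : Finite (StdTableau ℓ n) := by
  let f : StdTableau ℓ n → (Fin n → Fin ℓ × Fin n × Fin n) := fun T k =>
    (⟨(T.node (k + 1)).1, T.comp_lt (T.node_spec (by omega) (by omega)).1⟩,
     ⟨(T.node (k + 1)).2.1, (T.diag_bound (T.node_spec (by omega) (by omega)).1).1⟩,
     ⟨(T.node (k + 1)).2.2, (T.diag_bound (T.node_spec (by omega) (by omega)).1).2⟩)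
  apply Finite.of_injective f
  intro S T h
  apply ext_node
  intro k h1 h2
  have := congrFun h ⟨k - 1, by omega⟩
  simp only [f, Prod.mk.injEq, Fin.mk.injEq] at this
  rw [Nat.sub_add_cancel h1] at this
  exact Prod.ext this.1 (Prod.ext this.2.1 this.2.2)

noncomputable instance : Fintype (StdTableau ℓ n) := Fintype.ofFinite _

lemma content_eq (κ : ℕ → ℤ) (T : StdTableau ℓ n) (k : ℕ) :
    content κ T k = ncont κ (T.node k) := rfl

section sep

variable {K : Type*} [Field K] {t : Kˣ} {κ : ℕ → ℤ}

lemma weight_inj (hs : SeparatesF t n ℓ κ) {S T : StdTableau ℓ n}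
    (h : ∀ k, 1 ≤ k → k ≤ n → qint (t : K) (content κ S k) = qint (t : K) (content κ T k)) :
    S = T := by
  apply ext_node
  intro k
  induction k using Nat.strong_induction_on with
  | _ k ih =>
  intro h1 h2
  have hS := S.node_spec h1 h2
  have hT := T.node_spec h1 h2
  have hb : S.below k = T.below k := by
    apply Finset.image_congr
    intro j hj
    rw [Finset.mem_coe, Finset.mem_Icc] at hj
    exact ih j (by omega) (by omega) (by omega)
  have a1 := S.hasArms hS.1 hS.2.le
  have a2 := T.hasArms hT.1 hT.2.le
  rw [← hb] at a2
  have hc := S.card_below k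
  obtain ⟨e1, e2⟩ := sep_nodes hs a1 a2 (S.comp_lt hS.1) (T.comp_lt hT.1) 0 (by omega) (by omega)
    (by rw [add_zero]; exact h k h1 h2)
  have key : ∀ S T : StdTableau ℓ n, (∀ j < k, 1 ≤ j → j ≤ n → S.node j = T.node j) →
      (S.node k).1 = (T.node k).1 → (S.node k).2.2 + (T.node k).2.1 =
        (T.node k).2.2 + (S.node k).2.1 → ¬ (S.node k).2.1 < (T.node k).2.1 := by
    intro S T ih e1 e2 hlt
    have hS := S.node_spec h1 h2
    have hT := T.node_spec h1 h2
    have e3 : T.node k = ((T.node k).1, (T.node k).2.1, (T.node k).2.2) := rfl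
    have e4 : S.node k = ((T.node k).1, (S.node k).2.1, (S.node k).2.2) := by rw [← e1]
    have g1 := hT.1
    rw [e3] at g1
    have g2 := T.diag_lower g1 hlt.le (show (S.node k).2.2 ≤ (T.node k).2.2 by omega)
    have g3 := T.entry_mono g1 hlt.le (show (S.node k).2.2 ≤ (T.node k).2.2 by omega)
    rw [← e4] at g2 g3
    rw [← e3, hT.2] at g3
    have g4 := (T.mem_diag_iff _).1 g2
    have g5 := ih (T.entry (S.node k)) (by omega) g4 (T.entry_le_n _)
    rw [T.node_entry g2] at g5
    have g6 := S.entry_node g4 (T.entry_le_n _)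
    rw [g5, hS.2] at g6
    omega
  have k1 := key S T (fun j a b c => ih j a b c) e1 (by omega)
  have k2 := key T S (fun j a b c => (ih j a b c).symm) e1.symm (by omega)
  exact Prod.ext e1 (Prod.ext (by omega) (by omega))

lemma weight_ne (hs : SeparatesF t n ℓ κ) (T : StdTableau ℓ n) {k m : ℕ} (h1 : 1 ≤ k)
    (h2 : k < m) (h3 : m ≤ k + 2) (h4 : m ≤ n) :
    qint (t : K) (content κ T k) ≠ qint (t : K) (content κ T m) := by
  intro h
  have hA := T.node_spec h1 (by omega : k ≤ n)
  have hB := T.node_spec (by omega : 1 ≤ m) h4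
  have a1 := T.hasArms hA.1 (show T.entry (T.node k) ≤ m by omega)
  have a2 := T.hasArms hB.1 hB.2.le
  have hc := T.card_below m
  obtain ⟨e1, e2⟩ := sep_nodes hs a1 a2 (T.comp_lt hA.1) (T.comp_lt hB.1) 0 (by omega) (by omega)
    (by rw [add_zero]; exact h)
  clear h
  generalize T.node k = A at *
  generalize T.node m = B at *
  obtain ⟨l, i, j⟩ := A
  obtain ⟨l', i', j'⟩ := B
  simp only at e1 e2
  subst e1
  by_cases hij : i' ≤ i
  · have := T.entry_mono hA.1 hij (show j' ≤ j by omega)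
    omega
  · have g1 := T.entry_mono hB.1 (show i ≤ i' by omega) (show j ≤ j' by omega)
    -- the chain through two distinct intermediate nodes
    have g2 := T.entry_mono hB.1 (show i' - 1 ≤ i' by omega) (le_refl j')
    have g3 := T.entry_mono hB.1 (le_refl i') (show j' - 1 ≤ j' by omega)
    have m2 := T.diag_lower hB.1 (show i' - 1 ≤ i' by omega) (le_refl j')
    have m3 := T.diag_lower hB.1 (le_refl i') (show j' - 1 ≤ j' by omega)
    have g4 := T.entry_mono m2 (show i ≤ i' - 1 by omega) (show j ≤ j' by omega)
    have g5 := T.entry_mono m3 (show i ≤ i' by omega) (show j ≤ j' - 1 by omega)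
    have : (l, i' - 1, j') = (l, i', j' - 1) := T.bijOn.injOn m2 m3 (by omega)
    simp only [Prod.mk.injEq] at this
    omega

end sep

/-! ### Swapping entries -/

/-- `B` is directly to the right of, or directly below, `A`. -/
def Nbr (A B : Node) : Prop :=
  B = (A.1, A.2.1, A.2.2 + 1) ∨ B = (A.1, A.2.1 + 1, A.2.2)

/-- `V` is obtained from `T` by interchanging `r` and `r + 1`. -/
def IsSwap (r : ℕ) (V T : StdTableau ℓ n) : Prop := V.entry = swapEntry T.entry r

lemma swapEntry_swapEntry (f : Node → ℕ) (r : ℕ) : swapEntry (swapEntry f r) r = f := by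
  funext A
  simp only [swapEntry]
  split_ifs <;> omega

lemma IsSwap.symm {r : ℕ} {V T : StdTableau ℓ n} (h : IsSwap r V T) : IsSwap r T V := by
  rw [IsSwap, h, swapEntry_swapEntry]

lemma IsSwap.unique {r : ℕ} {V V' T : StdTableau ℓ n} (h : IsSwap r V T) (h' : IsSwap r V' T) :
    V = V' := ext_entry (Eq.trans h (Eq.symm h'))

lemma IsSwap.diag {r : ℕ} {V T : StdTableau ℓ n} (h : IsSwap r V T) (hr : 1 ≤ r) :
    V.shape.diagram = T.shape.diagram := by
  ext A
  rw [V.mem_diag_iff, T.mem_diag_iff, h]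
  simp only [swapEntry]
  split_ifs <;> omega

lemma IsSwap.shape {r : ℕ} {V T : StdTableau ℓ n} (h : IsSwap r V T) (hr : 1 ≤ r) :
    V.shape = T.shape := shape_eq_of_diag (h.diag hr)

lemma IsSwap.node {r : ℕ} {V T : StdTableau ℓ n} (h : IsSwap r V T) (hr : 1 ≤ r)
    (hn : r + 1 ≤ n) : V.node r = T.node (r + 1) ∧ V.node (r + 1) = T.node r := by
  constructor
  · apply V.node_eq hr
    rw [h, swapEntry, T.entry_node (by omega) hn]
    simp
  · apply V.node_eq (by omega)
    rw [h, swapEntry, T.entry_node hr (by omega)]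
    simp

lemma IsSwap.node_ne {r : ℕ} {V T : StdTableau ℓ n} (h : IsSwap r V T) {k : ℕ} (h1 : 1 ≤ k)
    (h2 : k ≤ n) (h3 : k ≠ r) (h4 : k ≠ r + 1) : V.node k = T.node k := by
  apply V.node_eq h1
  rw [h, swapEntry, T.entry_node h1 h2]
  simp [h3, h4]

lemma exists_swap (T : StdTableau ℓ n) {r : ℕ} (h1 : 1 ≤ r) (h2 : r + 1 ≤ n)
    (h : ¬ Nbr (T.node r) (T.node (r + 1))) : ∃ V : StdTableau ℓ n, IsSwap r V T := by
  have hk : ∀ A B, Nbr A B → ¬ (T.entry A = r ∧ T.entry B = r + 1) := by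
    intro A B hAB ⟨hA, hB⟩
    rw [T.node_eq h1 hA, T.node_eq (by omega) hB] at h
    exact h hAB
  have hlt : ∀ A B, Nbr A B → T.entry A < T.entry B →
      swapEntry T.entry r A < swapEntry T.entry r B := by
    intro A B hAB hlt
    have := hk A B hAB
    simp only [swapEntry]
    split_ifs <;> omega
  refine ⟨⟨T.shape, swapEntry T.entry r, ?_, ?_, ?_, ?_⟩, rfl⟩
  · intro A hA
    have := T.entry_zero A hA
    simp only [swapEntry]
    split_ifs <;> omega
  · refine ⟨?_, ?_, ?_⟩
    · intro A hA
      have := T.bijOn.mapsTo hA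
      simp only [Set.mem_Icc] at this ⊢
      simp only [swapEntry]
      split_ifs <;> omega
    · intro A hA B hB hAB
      apply T.bijOn.injOn hA hB
      simp only [swapEntry] at hAB
      split_ifs at hAB <;> omega
    · intro k hk
      simp only [Set.mem_Icc] at hk
      rw [Set.mem_image]
      by_cases e1 : k = r
      · refine ⟨T.node (r + 1), (T.node_spec (by omega) (by omega)).1, ?_⟩
        rw [swapEntry, T.entry_node (by omega) (by omega)]
        simp [e1]
      · by_cases e2 : k = r + 1
        · refine ⟨T.node r, (T.node_spec (by omega) (by omega)).1, ?_⟩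
          rw [swapEntry, T.entry_node (by omega) (by omega)]
          simp [e2]
        · refine ⟨T.node k, (T.node_spec (by omega) (by omega)).1, ?_⟩
          rw [swapEntry, T.entry_node (by omega) (by omega)]
          simp [e1, e2]
  · intro l i j hm
    exact hlt _ _ (Or.inl rfl) (T.row_inc l i j hm)
  · intro l i j hm
    exact hlt _ _ (Or.inr rfl) (T.col_inc l i j hm)

lemma nbr_entry {A B : Node} (h : Nbr A B) (T : StdTableau ℓ n) (hB : B ∈ T.shape.diagram) :
    T.entry A < T.entry B := by
  obtain ⟨l, i, j⟩ := A
  rcases h with rfl | rfl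
  · exact T.row_inc l i j hB
  · exact T.col_inc l i j hB

lemma nbr_cont {A B : Node} (κ : ℕ → ℤ) (h : Nbr A B) :
    ncont κ B = ncont κ A + 1 ∨ ncont κ A = ncont κ B + 1 := by
  obtain ⟨l, i, j⟩ := A
  rcases h with rfl | rfl
  · left; simp only [ncont]; push_cast; ring
  · right; simp only [ncont]; push_cast; ring

/-- If both `T` and `T s_r` are standard then the contents of `r` and `r+1` are not adjacent. -/
lemma IsSwap.weight_ne {K : Type*} [Field K] {t : Kˣ} {κ : ℕ → ℤ} (hs : SeparatesF t n ℓ κ)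
    {r : ℕ} {V T : StdTableau ℓ n} (h : IsSwap r V T) (hr : 1 ≤ r) (hn : r + 1 ≤ n) (e : ℤ)
    (he : e = 1 ∨ e = -1) :
    qint (t : K) (content κ T r) ≠ qint (t : K) (content κ T (r + 1) + e) := by
  intro hq
  have hA := T.node_spec hr (by omega : r ≤ n)
  have hB := T.node_spec (by omega : 1 ≤ r + 1) hn
  have hVA := V.entry_node (by omega : 1 ≤ r + 1) hn
  have hVB := V.node_spec hr (by omega : r ≤ n)
  rw [(h.node hr hn).1] at hVB
  rw [(h.node hr hn).2] at hVA
  have a1 := T.hasArms hA.1 hA.2.le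
  have hb : V.below r = T.below r := by
    apply Finset.image_congr
    intro j hj
    rw [Finset.mem_coe, Finset.mem_Icc] at hj
    exact h.node_ne (by omega) (by omega) (by omega) (by omega)
  have a2 := V.hasArms hVB.1 hVB.2.le
  rw [hb] at a2
  have hc := T.card_below r
  obtain ⟨e1, e2⟩ := sep_nodes hs a1 a2 (T.comp_lt hA.1) (T.comp_lt hB.1) e (by omega) (by omega)
    hq
  have hVA1 : T.node r ∈ V.shape.diagram := by rw [h.diag hr]; exact hA.1
  clear hq
  generalize T.node r = A at *
  generalize T.node (r + 1) = B at *
  obtain ⟨l, i, j⟩ := A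
  obtain ⟨l', i', j'⟩ := B
  simp only at e1 e2
  subst e1
  by_cases hij : i' ≤ i ∧ j' ≤ j
  · have := T.entry_mono hA.1 hij.1 hij.2
    omega
  · have := V.entry_mono hVB.1 (show i ≤ i' by omega) (show j ≤ j' by omega)
    omega

/-- Any two standard tableaux of the same shape are connected by swaps. -/
lemma connected (R : StdTableau ℓ n → StdTableau ℓ n → Prop) (hrefl : ∀ S, R S S)
    (htrans : ∀ S T U, R S T → R T U → R S U)
    (hsw : ∀ r, 1 ≤ r → r + 1 ≤ n → ∀ S T, IsSwap r S T → R S T)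
    {S T : StdTableau ℓ n} (h : S.shape = T.shape) : R S T := by
  have key : ∀ j, j ≤ n → ∀ S T : StdTableau ℓ n, S.shape = T.shape →
      (∀ k, j < k → k ≤ n → S.node k = T.node k) → R S T := by
    intro j
    induction j with
    | zero =>
      intro _ S T _ hk
      have : S = T := ext_node fun k h1 h2 => hk k (by omega) h2
      subst this
      exact hrefl S
    | succ j ih =>
      intro hj S T hST hk
      have inner : ∀ d : ℕ, ∀ S : StdTableau ℓ n, S.shape = T.shape →
          (∀ k, j + 1 < k → k ≤ n → S.node k = T.node k) →
          S.entry (T.node (j + 1)) + d = j + 1 → R S T := by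
        intro d
        induction d with
        | zero =>
          intro S hST hk hd
          apply ih (by omega) S T hST
          intro k h1 h2
          by_cases e : k = j + 1
          · subst e
            exact S.node_eq (by omega) (by omega)
          · exact hk k (by omega) h2
        | succ d ihd =>
          intro S hST hk hd
          have hN := T.node_spec (by omega : 1 ≤ j + 1) hj
          have hNS : T.node (j + 1) ∈ S.shape.diagram := by rw [hST]; exact hN.1
          have hm := (S.mem_diag_iff _).1 hNS
          have hSN := S.node_eq hm rfl
          obtain ⟨V, hV⟩ := exists_swap S (r := S.entry (T.node (j + 1))) hm (by omega) (by
            rw [hSN]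
            intro hnb
            have hP := S.node_spec (by omega : 1 ≤ S.entry (T.node (j + 1)) + 1) (by omega)
            have hPT := hP.1
            rw [hST] at hPT
            have h1 := nbr_entry hnb T hPT
            rw [hN.2] at h1
            have h2 := hk _ h1 (T.entry_le_n _)
            rw [T.node_entry hPT] at h2
            have h3 := S.entry_node (by omega) (T.entry_le_n
              (S.node (S.entry (T.node (j + 1)) + 1)))
            rw [h2, hP.2] at h3
            omega)
          apply htrans S V T (hsw _ hm (by omega) _ _ hV.symm)
          apply ihd V ((hV.shape hm).trans hST)
          · intro k h1 h2
            rw [← hk k h1 h2]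
            exact hV.node_ne (by omega) h2 (by omega) (by omega)
          · rw [hV]
            simp only [swapEntry, if_true]
            omega
      have hN := T.node_spec (by omega : 1 ≤ j + 1) hj
      have hNS : T.node (j + 1) ∈ S.shape.diagram := by rw [hST]; exact hN.1
      have hm := (S.mem_diag_iff _).1 hNS
      have hle : S.entry (T.node (j + 1)) ≤ j + 1 := by
        by_contra hgt
        have h1 := hk _ (not_le.1 hgt) (S.entry_le_n _)
        rw [S.node_entry hNS] at h1
        have h2 := T.entry_node hm (S.entry_le_n _)
        rw [← h1, hN.2] at h2
        omega
      exact inner (j + 1 - S.entry (T.node (j + 1))) S hST hk (by omega)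
  exact key n le_rfl S T h (fun k h1 h2 => by omega)

end StdTableau

end Paper

open scoped BigOperators
open scoped Classical

namespace Paper

/-! ## The seminormal matrices -/

namespace SN

lemma ring_braid {R A : Type*} [CommRing R] [Ring A] [Algebra R A] (q : R) (T S x y z : A)
    (hTx : T * x = y * T - ((q - 1) • y + 1)) (hTy : T * y = x * T + ((q - 1) • y + 1))
    (hTz : T * z = z * T) (hSy : S * y = z * S - ((q - 1) • z + 1))
    (hSz : S * z = y * S + ((q - 1) • z + 1)) (hSx : S * x = x * S)
    (hTT : T * T = (q - 1) • T + q • 1) (hSS : S * S = (q - 1) • S + q • 1) :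
    (T * S * T - S * T * S) * x = z * (T * S * T - S * T * S) ∧
    (T * S * T - S * T * S) * y = y * (T * S * T - S * T * S) ∧
    (T * S * T - S * T * S) * z = x * (T * S * T - S * T * S) := by
  have as : ∀ {a b c : A}, a * b = c → ∀ m, a * (b * m) = c * m := by
    intro a b c h m; rw [← mul_assoc, h]
  refine ⟨?_, ?_, ?_⟩ <;>
  · simp only [mul_assoc, sub_mul, mul_sub, add_mul, mul_add, hTx, hTy, hTz, hSy, hSz, hSx,
      as hTx, as hTy, as hTz, as hSy, as hSz, as hSx, hTT, hSS, smul_mul_assoc,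
      mul_smul_comm, mul_one, one_mul, smul_add, smul_sub]
    module

/-- Square matrices indexed by standard tableaux. -/
abbrev Mat (ℓ n : ℕ) (K : Type*) : Type _ := Matrix (StdTableau ℓ n) (StdTableau ℓ n) K

variable {ℓ n : ℕ} {K : Type*} [Field K] (t : Kˣ) (κ : ℕ → ℤ)

/-- The weight of `k` in `T`. -/
noncomputable def w (k : ℕ) (T : StdTableau ℓ n) : K := qint (t : K) (content κ T k)

/-- Diagonal coefficient. -/
noncomputable def ca (r : ℕ) (T : StdTableau ℓ n) : K :=
  (1 + ((t : K) - 1) * w t κ (r + 1) T) / (w t κ (r + 1) T - w t κ r T)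

/-- The matrix of `L_k`. -/
noncomputable def ML (k : ℕ) : Mat ℓ n K :=
  Matrix.diagonal (w t κ k)

/-- Diagonal part of `T_r`. -/
noncomputable def MD (r : ℕ) : Mat ℓ n K :=
  Matrix.diagonal (ca t κ r)

/-- Off-diagonal part of `T_r`. -/
noncomputable def MB (r : ℕ) : Mat ℓ n K :=
  Matrix.of fun u T => if StdTableau.IsSwap r u T then 1 + ca t κ r T else 0

/-- The matrix of `T_r`. -/
noncomputable def MT (r : ℕ) : Mat ℓ n K :=
  MD t κ r + MB t κ r

lemma MB_apply (r : ℕ) (u T : StdTableau ℓ n) :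
    MB t κ r u T = if StdTableau.IsSwap r u T then 1 + ca t κ r T else 0 := rfl

variable {t κ}

lemma w_swap {r : ℕ} {V T : StdTableau ℓ n} (h : StdTableau.IsSwap r V T) (hr : 1 ≤ r)
    (hn : r + 1 ≤ n) : w t κ r V = w t κ (r + 1) T ∧ w t κ (r + 1) V = w t κ r T := by
  simp only [w, StdTableau.content_eq, (h.node hr hn).1, (h.node hr hn).2, and_self]

lemma w_swap_ne {r : ℕ} {V T : StdTableau ℓ n} (h : StdTableau.IsSwap r V T) {k : ℕ}
    (h1 : 1 ≤ k) (h2 : k ≤ n) (h3 : k ≠ r) (h4 : k ≠ r + 1) : w t κ k V = w t κ k T := by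
  simp only [w, StdTableau.content_eq, h.node_ne h1 h2 h3 h4]

lemma w_ne (hs : SeparatesF t n ℓ κ) (T : StdTableau ℓ n) {k m : ℕ} (h1 : 1 ≤ k)
    (h2 : k < m) (h3 : m ≤ k + 2) (h4 : m ≤ n) : w t κ k T ≠ w t κ m T :=
  StdTableau.weight_ne hs T h1 h2 h3 h4

lemma ca_mul (hs : SeparatesF t n ℓ κ) (T : StdTableau ℓ n) {r : ℕ} (h1 : 1 ≤ r)
    (h2 : r + 1 ≤ n) : ca t κ r T * (w t κ (r + 1) T - w t κ r T) =
      1 + ((t : K) - 1) * w t κ (r + 1) T := by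
  rw [ca, div_mul_cancel₀]
  exact sub_ne_zero.2 (w_ne hs T h1 (by omega) (by omega) h2).symm

lemma ca_add (hs : SeparatesF t n ℓ κ) {V T : StdTableau ℓ n} {r : ℕ} (h1 : 1 ≤ r)
    (h2 : r + 1 ≤ n) (h : StdTableau.IsSwap r V T) : ca t κ r V + ca t κ r T = (t : K) - 1 := by
  have e1 := ca_mul hs T h1 h2
  have e2 := ca_mul hs V h1 h2
  rw [(w_swap h h1 h2).1, (w_swap h h1 h2).2] at e2
  have h0 : w t κ (r + 1) T - w t κ r T ≠ 0 :=
    sub_ne_zero.2 (w_ne hs T h1 (by omega) (by omega) h2).symm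
  apply mul_right_cancel₀ h0
  linear_combination e1 - e2

lemma ca_cases (hs : SeparatesF t n ℓ κ) {T : StdTableau ℓ n} {r : ℕ} (h1 : 1 ≤ r)
    (h2 : r + 1 ≤ n) (h : ¬ ∃ V, StdTableau.IsSwap r V T) :
    ca t κ r T = t ∨ ca t κ r T = -1 := by
  have hN : StdTableau.Nbr (T.node r) (T.node (r + 1)) := by
    by_contra hh
    exact h (T.exists_swap h1 h2 hh)
  have e1 := ca_mul hs T h1 h2
  have h0 : w t κ (r + 1) T - w t κ r T ≠ 0 :=
    sub_ne_zero.2 (w_ne hs T h1 (by omega) (by omega) h2).symm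
  have ht : (t : K) ≠ 0 := t.ne_zero
  rcases StdTableau.nbr_cont κ hN with hc | hc
  · left
    have e : w t κ (r + 1) T = t * w t κ r T + 1 := by
      simp only [w, StdTableau.content_eq, hc, qint_succ _ ht]
    apply mul_right_cancel₀ h0
    rw [e1, e]; ring
  · right
    have e : w t κ r T = t * w t κ (r + 1) T + 1 := by
      simp only [w, StdTableau.content_eq, hc, qint_succ _ ht]
    apply mul_right_cancel₀ h0
    rw [e1, e]; ring

lemma MB_ML {r : ℕ} (hr : 1 ≤ r) (hn : r + 1 ≤ n) (k j : ℕ)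
    (h : ∀ V T : StdTableau ℓ n, StdTableau.IsSwap r V T → w t κ k T = w t κ j V) :
    (MB t κ r : Mat ℓ n K) * ML t κ k =
      ML t κ j * MB t κ r := by
  ext u T
  rw [ML, ML, Matrix.mul_diagonal, Matrix.diagonal_mul, MB_apply]
  split_ifs with hh
  · rw [h u T hh, mul_comm]
  · simp

lemma MB_L {r : ℕ} (hr : 1 ≤ r) (hn : r + 1 ≤ n) :
    (MB t κ r : Mat ℓ n K) * ML t κ r =
      ML t κ (r + 1) * MB t κ r :=
  MB_ML hr hn _ _ fun V T h => (w_swap h hr hn).2.symm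

lemma MB_L' {r : ℕ} (hr : 1 ≤ r) (hn : r + 1 ≤ n) :
    (MB t κ r : Mat ℓ n K) * ML t κ (r + 1) =
      ML t κ r * MB t κ r :=
  MB_ML hr hn _ _ fun V T h => (w_swap h hr hn).1.symm

lemma MB_Lne {r : ℕ} (hr : 1 ≤ r) (hn : r + 1 ≤ n) {k : ℕ}
    (h1 : 1 ≤ k) (h2 : k ≤ n) (h3 : k ≠ r) (h4 : k ≠ r + 1) :
    (MB t κ r : Mat ℓ n K) * ML t κ k =
      ML t κ k * MB t κ r :=
  MB_ML hr hn _ _ fun V T h => (w_swap_ne h h1 h2 h3 h4).symm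

lemma MD_L (r k : ℕ) : (MD t κ r : Mat ℓ n K) * ML t κ k =
    ML t κ k * MD t κ r := by
  simp only [MD, ML, Matrix.diagonal_mul_diagonal, mul_comm]

lemma ML_L (r k : ℕ) : (ML t κ r : Mat ℓ n K) * ML t κ k =
    ML t κ k * ML t κ r := by
  simp only [ML, Matrix.diagonal_mul_diagonal, mul_comm]

lemma MT_Lne {r : ℕ} (hr : 1 ≤ r) (hn : r + 1 ≤ n) {k : ℕ}
    (h1 : 1 ≤ k) (h2 : k ≤ n) (h3 : k ≠ r) (h4 : k ≠ r + 1) :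
    (MT t κ r : Mat ℓ n K) * ML t κ k =
      ML t κ k * MT t κ r := by
  rw [MT, add_mul, mul_add, MB_Lne hr hn h1 h2 h3 h4, MD_L]

lemma MD_rel (hs : SeparatesF t n ℓ κ) {r : ℕ} (hr : 1 ≤ r) (hn : r + 1 ≤ n) :
    (MD t κ r : Mat ℓ n K) * ML t κ r =
      ML t κ (r + 1) * MD t κ r - (((t : K) - 1) • ML t κ (r + 1) + 1) := by
  rw [eq_sub_iff_add_eq]
  simp only [MD, ML, Matrix.diagonal_mul_diagonal, ← Matrix.diagonal_one, ← Matrix.diagonal_smul,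
    Matrix.diagonal_add]
  congr 1
  funext T
  have := ca_mul hs T hr hn
  simp only [Pi.smul_apply, smul_eq_mul]
  linear_combination -this

lemma MT_L (hs : SeparatesF t n ℓ κ) {r : ℕ} (hr : 1 ≤ r) (hn : r + 1 ≤ n) :
    (MT t κ r : Mat ℓ n K) * ML t κ r =
      ML t κ (r + 1) * MT t κ r - (((t : K) - 1) • ML t κ (r + 1) + 1) := by
  rw [MT, add_mul, mul_add, MB_L hr hn, MD_rel hs hr hn]
  abel

lemma MT_L' (hs : SeparatesF t n ℓ κ) {r : ℕ} (hr : 1 ≤ r) (hn : r + 1 ≤ n) :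
    (MT t κ r : Mat ℓ n K) * ML t κ (r + 1) =
      ML t κ r * MT t κ r + (((t : K) - 1) • ML t κ (r + 1) + 1) := by
  rw [MT, add_mul, mul_add, MB_L' hr hn, ← MD_L r r, MD_rel hs hr hn, MD_L]
  abel

lemma sum_swap_left {r : ℕ} {u : StdTableau ℓ n} (f : StdTableau ℓ n → K)
    {V : StdTableau ℓ n} (h : StdTableau.IsSwap r u V) :
    ∑ x, (if StdTableau.IsSwap r u x then f x else 0) = f V := by
  rw [Finset.sum_eq_single V]
  · rw [if_pos h]
  · intro b _ hb
    rw [if_neg]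
    intro hh
    exact hb (StdTableau.IsSwap.unique hh.symm h.symm)
  · simp

lemma MB_mul (r : ℕ) (X : Mat ℓ n K) {u V : StdTableau ℓ n}
    (h : StdTableau.IsSwap r u V) (T : StdTableau ℓ n) :
    (MB t κ r * X : Mat ℓ n K) u T = (1 + ca t κ r V) * X V T := by
  rw [Matrix.mul_apply, ← sum_swap_left (K := K) (fun x => (1 + ca t κ r x) * X x T) h]
  apply Finset.sum_congr rfl
  intro x _
  rw [MB_apply]
  split_ifs <;> simp

lemma MB_mul_zero (r : ℕ) (X : Mat ℓ n K)
    {u : StdTableau ℓ n} (h : ¬ ∃ V, StdTableau.IsSwap r u V) (T : StdTableau ℓ n) :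
    (MB t κ r * X : Mat ℓ n K) u T = 0 := by
  rw [Matrix.mul_apply]
  apply Finset.sum_eq_zero
  intro x _
  rw [MB_apply, if_neg (fun hh => h ⟨x, hh⟩), zero_mul]

lemma MT_quad (hs : SeparatesF t n ℓ κ) {r : ℕ} (hr : 1 ≤ r) (hn : r + 1 ≤ n) :
    (MT t κ r : Mat ℓ n K) * MT t κ r =
      ((t : K) - 1) • MT t κ r + (t : K) • 1 := by
  have h1 : (MD t κ r : Mat ℓ n K) * MB t κ r +
      MB t κ r * MD t κ r = ((t : K) - 1) • MB t κ r := by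
    ext u T
    rw [Matrix.add_apply, MD, Matrix.mul_diagonal, Matrix.diagonal_mul, Matrix.smul_apply,
      MB_apply, smul_eq_mul]
    split_ifs with h
    · linear_combination (1 + ca t κ r T) * ca_add hs hr hn h
    · simp
  have h2 : (MD t κ r : Mat ℓ n K) * MD t κ r +
      MB t κ r * MB t κ r = ((t : K) - 1) • MD t κ r + (t : K) • 1 := by
    ext u T
    rw [Matrix.add_apply, MD, Matrix.diagonal_mul_diagonal, Matrix.add_apply, Matrix.smul_apply,
      Matrix.smul_apply]
    by_cases hV : ∃ V, StdTableau.IsSwap r u V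
    · obtain ⟨V, hV⟩ := hV
      rw [MB_mul r _ hV, MB_apply]
      by_cases e : u = T
      · subst e
        rw [if_pos hV.symm]
        simp only [Matrix.diagonal_apply_eq, Matrix.one_apply_eq, smul_eq_mul]
        have := ca_add hs hr hn hV
        linear_combination (1 + ca t κ r u) * this
      · rw [if_neg]
        · simp [e]
        · intro hh
          exact e (StdTableau.IsSwap.unique hV hh.symm)
    · rw [MB_mul_zero r _ hV]
      by_cases e : u = T
      · subst e
        simp only [Matrix.diagonal_apply_eq, Matrix.one_apply_eq, smul_eq_mul]
        rcases ca_cases hs hr hn (T := u) (fun ⟨V, hh⟩ => hV ⟨V, hh.symm⟩) with h | h <;>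
          rw [h] <;> ring
      · simp [e]
  have : (MT t κ r : Mat ℓ n K) * MT t κ r =
    (MD t κ r * MD t κ r + MB t κ r * MB t κ r) + (MD t κ r * MB t κ r + MB t κ r * MD t κ r) := by
      rw [MT]; noncomm_ring
  rw [this, h1, h2, MT, smul_add]
  abel

/-- From two tableaux of the same diagram in which `r, r+1` occur in different order. -/
lemma exists_swap_of {u T : StdTableau ℓ n} (hd : u.shape.diagram = T.shape.diagram) {r : ℕ}
    (hr : 1 ≤ r) (hn : r + 1 ≤ n) (h : u.entry (T.node (r + 1)) < u.entry (T.node r)) :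
    ∃ V, StdTableau.IsSwap r V T := by
  apply T.exists_swap hr hn
  intro hN
  have := StdTableau.nbr_entry hN u (by rw [hd]; exact (T.node_spec (by omega) hn).1)
  omega

end SN

end Paper

open scoped BigOperators
open scoped Classical

namespace Paper

namespace SN

open StdTableau

variable {ℓ n : ℕ} {K : Type*} [Field K] {t : Kˣ} {κ : ℕ → ℤ}

lemma MB2_ne {r s : ℕ} {u T : StdTableau ℓ n} (h : (MB t κ r * MB t κ s : Mat ℓ n K) u T ≠ 0) :
    ∃ V, IsSwap r u V ∧ IsSwap s V T := by
  by_cases hV : ∃ V, IsSwap r u V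
  · obtain ⟨V, hV⟩ := hV
    refine ⟨V, hV, ?_⟩
    rw [MB_mul r _ hV, MB_apply] at h
    by_contra hh
    rw [if_neg hh] at h
    simp at h
  · rw [MB_mul_zero r _ hV] at h
    exact absurd rfl h

lemma MB3_ne {r s q : ℕ} {u T : StdTableau ℓ n}
    (h : (MB t κ r * (MB t κ s * MB t κ q) : Mat ℓ n K) u T ≠ 0) :
    ∃ V V', IsSwap r u V ∧ IsSwap s V V' ∧ IsSwap q V' T := by
  by_cases hV : ∃ V, IsSwap r u V
  · obtain ⟨V, hV⟩ := hV
    rw [MB_mul r _ hV] at h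
    obtain ⟨V', h1, h2⟩ := MB2_ne (right_ne_zero_of_mul h)
    exact ⟨V, V', hV, h1, h2⟩
  · rw [MB_mul_zero r _ hV] at h
    exact absurd rfl h

lemma MB_far_aux {r s : ℕ} (hr : 1 ≤ r) (hn : r + 1 ≤ n) (hs : 1 ≤ s) (hsn : s + 1 ≤ n)
    (h : r + 1 < s ∨ s + 1 < r) {u T : StdTableau ℓ n}
    (hne : (MB t κ r * MB t κ s : Mat ℓ n K) u T ≠ 0) :
    (MB t κ r * MB t κ s : Mat ℓ n K) u T = (MB t κ s * MB t κ r : Mat ℓ n K) u T := by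
  obtain ⟨V, h1, h2⟩ := MB2_ne hne
  have e1 : V.node r = T.node r := h2.node_ne hr (by omega) (by omega) (by omega)
  have e2 : V.node (r + 1) = T.node (r + 1) := h2.node_ne (by omega) hn (by omega) (by omega)
  obtain ⟨V', hV'⟩ := exists_swap_of (u := u) (T := T) ((h1.diag hr).trans (h2.diag hs)) hr hn (by
    rw [← e1, ← e2, ← (h1.node hr hn).1, ← (h1.node hr hn).2, u.entry_node hr (by omega),
      u.entry_node (by omega) hn]
    omega)
  have h3 : IsSwap s u V' := by
    rw [IsSwap, h1, h2, hV']
    funext A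
    simp only [swapEntry]
    split_ifs <;> omega
  rw [MB_mul r _ h1, MB_mul s _ h3, MB_apply, MB_apply, if_pos h2, if_pos hV']
  have c1 : ca t κ r V = ca t κ r T := by
    simp only [ca, w, content_eq, e1, e2]
  have c2 : ca t κ s V' = ca t κ s T := by
    simp only [ca, w, content_eq, hV'.node_ne hs (show s ≤ n by omega) (by omega) (by omega),
      hV'.node_ne (show 1 ≤ s + 1 by omega) hsn (by omega) (by omega)]
  rw [c1, c2, mul_comm]

lemma MB_far {r s : ℕ} (hr : 1 ≤ r) (hn : r + 1 ≤ n) (hs : 1 ≤ s) (hsn : s + 1 ≤ n)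
    (h : r + 1 < s ∨ s + 1 < r) :
    (MB t κ r * MB t κ s : Mat ℓ n K) = MB t κ s * MB t κ r := by
  ext u T
  by_cases h1 : (MB t κ r * MB t κ s : Mat ℓ n K) u T = 0
  · by_cases h2 : (MB t κ s * MB t κ r : Mat ℓ n K) u T = 0
    · rw [h1, h2]
    · exact (MB_far_aux hs hsn hr hn h.symm h2).symm
  · exact MB_far_aux hr hn hs hsn h h1

lemma MDB_far {r s : ℕ} (hr : 1 ≤ r) (hn : r + 1 ≤ n)
    (h : r + 1 < s ∨ s + 1 < r) :
    (MB t κ s * MD t κ r : Mat ℓ n K) = MD t κ r * MB t κ s := by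
  ext u T
  rw [MD, Matrix.mul_diagonal, Matrix.diagonal_mul, MB_apply]
  split_ifs with hh
  · have c2 : ca t κ r u = ca t κ r T := by
      simp only [ca, w, content_eq, hh.node_ne hr (show r ≤ n by omega) (by omega) (by omega),
        hh.node_ne (show 1 ≤ r + 1 by omega) hn (by omega) (by omega)]
    rw [c2, mul_comm]
  · simp

lemma MT_far {r s : ℕ} (hr : 1 ≤ r) (hn : r + 1 ≤ n) (hs : 1 ≤ s) (hsn : s + 1 ≤ n)
    (h : r + 1 < s ∨ s + 1 < r) :
    (MT t κ r * MT t κ s : Mat ℓ n K) = MT t κ s * MT t κ r := by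
  have hD : (MD t κ r * MD t κ s : Mat ℓ n K) =
      MD t κ s * MD t κ r := by
    simp only [MD, Matrix.diagonal_mul_diagonal, mul_comm]
  rw [MT, MT, add_mul, mul_add, mul_add, add_mul, mul_add, mul_add, hD,
    MB_far hr hn hs hsn h, MDB_far hr hn h, MDB_far hs hsn h.symm]
  abel

lemma swapEntry_braid (f : Node → ℕ) (r : ℕ) :
    swapEntry (swapEntry (swapEntry f r) (r + 1)) r =
      swapEntry (swapEntry (swapEntry f (r + 1)) r) (r + 1) := by
  funext A
  simp only [swapEntry]
  have e1 : ¬ r = r + 1 + 1 := by omega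
  have e2 : ¬ r + 1 + 1 = r := by omega
  by_cases h1 : f A = r
  · simp [h1, e1, e2]
  · by_cases h2 : f A = r + 1
    · simp [h2, e1, e2]
    · by_cases h3 : f A = r + 2
      · simp [h3, e1]
      · simp [h1, h2, h3]

section braid

variable {r : ℕ} (hr : 1 ≤ r) (hn : r + 2 ≤ n)

include hr hn

lemma B_rsr {u T V V' : StdTableau ℓ n} (h1 : IsSwap r u V) (h2 : IsSwap (r + 1) V V')
    (h3 : IsSwap r V' T) :
    (MB t κ r * (MB t κ (r + 1) * MB t κ r) : Mat ℓ n K) u T =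
      (MB t κ (r + 1) * (MB t κ r * MB t κ (r + 1)) : Mat ℓ n K) u T := by
  have hd : u.shape.diagram = T.shape.diagram :=
    ((h1.diag hr).trans (h2.diag (by omega))).trans (h3.diag hr)
  have hue : u.entry = swapEntry (swapEntry (swapEntry T.entry r) (r + 1)) r := by
    rw [h1, h2, h3]
  have a1 : u.entry (T.node r) = r + 2 := by
    rw [hue]; simp only [swapEntry, T.entry_node hr (show r ≤ n by omega)]
    split_ifs <;> omega
  have a2 : u.entry (T.node (r + 1)) = r + 1 := by
    rw [hue]; simp only [swapEntry, T.entry_node (show 1 ≤ r + 1 by omega) (by omega)]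
    split_ifs <;> omega
  have a3 : u.entry (T.node (r + 2)) = r := by
    rw [hue]; simp only [swapEntry, T.entry_node (show 1 ≤ r + 2 by omega) (by omega)]
    split_ifs <;> omega
  obtain ⟨W', hW'⟩ := exists_swap_of (u := u) (T := T) (r := r + 1) hd (by omega) (by omega)
    (by rw [a2, show r + 1 + 1 = r + 2 from rfl, a3]; omega)
  have b1 : W'.node r = T.node r := hW'.node_ne hr (by omega) (by omega) (by omega)
  obtain ⟨b2, b3⟩ := hW'.node (by omega) (by omega)
  obtain ⟨W, hW⟩ := exists_swap_of (u := u) (T := W') (r := r)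
    (hd.trans (hW'.diag (by omega)).symm) hr (by omega)
    (by rw [b1, b2, a1, show r + 1 + 1 = r + 2 from rfl, a3]; omega)
  obtain ⟨c1, c2⟩ := hW.node hr (by omega)
  have c3 : W.node (r + 2) = W'.node (r + 2) :=
    hW.node_ne (by omega) (by omega) (by omega) (by omega)
  have hu : IsSwap (r + 1) u W := by
    rw [IsSwap, hue, hW, hW', swapEntry_braid]
  obtain ⟨d1, d2⟩ := h3.node hr (by omega)
  have d3 : V'.node (r + 2) = T.node (r + 2) :=
    h3.node_ne (by omega) (by omega) (by omega) (by omega)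
  have e1 : V.node r = V'.node r := h2.node_ne hr (by omega) (by omega) (by omega)
  obtain ⟨e2, e3⟩ := h2.node (by omega) (by omega)
  rw [MB_mul r _ h1, MB_mul _ _ h2, MB_mul _ _ hu, MB_mul _ _ hW, MB_apply, MB_apply, if_pos h3,
    if_pos hW']
  have f1 : ca t κ r V = ca t κ (r + 1) T := by
    simp only [ca, w, content_eq, e1, e2, d1, show r + 1 + 1 = r + 2 from rfl, d3]
  have f2 : ca t κ (r + 1) V' = ca t κ r W' := by
    simp only [ca, w, content_eq, d2, show r + 1 + 1 = r + 2 from rfl, d3, b1, b2]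
  have f3 : ca t κ r T = ca t κ (r + 1) W := by
    simp only [ca, w, content_eq, show r + 1 + 1 = r + 2 from rfl, c2, c3, b1]
    simp only [show r + 1 + 1 = r + 2 from rfl] at b3
    rw [b3]
  rw [f1, f2, f3]
  ring

lemma B_srs {u T V V' : StdTableau ℓ n} (h1 : IsSwap (r + 1) u V) (h2 : IsSwap r V V')
    (h3 : IsSwap (r + 1) V' T) :
    (MB t κ r * (MB t κ (r + 1) * MB t κ r) : Mat ℓ n K) u T =
      (MB t κ (r + 1) * (MB t κ r * MB t κ (r + 1)) : Mat ℓ n K) u T := by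
  have hd : u.shape.diagram = T.shape.diagram :=
    ((h1.diag (by omega)).trans (h2.diag (by omega))).trans (h3.diag (by omega))
  have hue : u.entry = swapEntry (swapEntry (swapEntry T.entry (r + 1)) r) (r + 1) := by
    rw [h1, h2, h3]
  have a1 : u.entry (T.node r) = r + 2 := by
    rw [hue]; simp only [swapEntry, T.entry_node hr (show r ≤ n by omega)]
    split_ifs <;> omega
  have a2 : u.entry (T.node (r + 1)) = r + 1 := by
    rw [hue]; simp only [swapEntry, T.entry_node (show 1 ≤ r + 1 by omega) (by omega)]
    split_ifs <;> omega
  have a3 : u.entry (T.node (r + 2)) = r := by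
    rw [hue]; simp only [swapEntry, T.entry_node (show 1 ≤ r + 2 by omega) (by omega)]
    split_ifs <;> omega
  obtain ⟨W', hW'⟩ := exists_swap_of (u := u) (T := T) (r := r) hd (by omega) (by omega)
    (by rw [a2, a1]; omega)
  have b1 : W'.node (r + 2) = T.node (r + 2) :=
    hW'.node_ne (by omega) (by omega) (by omega) (by omega)
  obtain ⟨b2, b3⟩ := hW'.node (by omega) (by omega)
  obtain ⟨W, hW⟩ := exists_swap_of (u := u) (T := W') (r := r + 1)
    (hd.trans (hW'.diag (by omega)).symm) (by omega) (by omega)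
    (by rw [show r + 1 + 1 = r + 2 from rfl, b1, b3, a1, a3]; omega)
  have hu : IsSwap r u W := by
    rw [IsSwap, hue, hW, hW', swapEntry_braid]
  exact B_rsr hr hn hu hW hW'

lemma MB_braid :
    (MB t κ r * (MB t κ (r + 1) * MB t κ r) : Mat ℓ n K) =
      (MB t κ (r + 1) * (MB t κ r * MB t κ (r + 1))) := by
  ext u T
  by_cases h1 : (MB t κ r * (MB t κ (r + 1) * MB t κ r) : Mat ℓ n K) u T = 0
  · by_cases h2 : (MB t κ (r + 1) * (MB t κ r * MB t κ (r + 1)) : Mat ℓ n K) u T = 0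
    · rw [h1, h2]
    · obtain ⟨V, V', a, b, c⟩ := MB3_ne h2
      exact B_srs hr hn a b c
  · obtain ⟨V, V', a, b, c⟩ := MB3_ne h1
    exact B_rsr hr hn a b c

omit hr hn in
lemma hom_apply {X : Mat ℓ n K} {k j : ℕ}
    (h : X * ML t κ k = ML t κ j * X) {u T : StdTableau ℓ n} (hne : w t κ k T ≠ w t κ j u) :
    X u T = 0 := by
  have := congrFun (congrFun h u) T
  rw [ML, ML, Matrix.mul_diagonal, Matrix.diagonal_mul, mul_comm] at this
  by_contra h0
  exact hne (mul_right_cancel₀ h0 this)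

omit hr hn in
lemma hom_mul {X Y : Mat ℓ n K} {k j i : ℕ}
    (h : X * ML t κ j = ML t κ i * X) (h' : Y * ML t κ k = ML t κ j * Y) :
    (X * Y) * ML t κ k = ML t κ i * (X * Y) := by
  rw [mul_assoc, h', ← mul_assoc, h, mul_assoc]

lemma MT_braid (hs : SeparatesF t n ℓ κ) :
    (MT t κ r * MT t κ (r + 1) * MT t κ r : Mat ℓ n K) =
      MT t κ (r + 1) * MT t κ r * MT t κ (r + 1) := by
  rw [← sub_eq_zero]
  obtain ⟨p1, p2, p3⟩ := ring_braid (t : K) (MT t κ r)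
    (MT t κ (r + 1) : Mat ℓ n K) (ML t κ r) (ML t κ (r + 1))
    (ML t κ (r + 2)) (MT_L hs hr (by omega)) (MT_L' hs hr (by omega))
    (MT_Lne hr (by omega) (by omega) (by omega) (by omega) (by omega))
    (MT_L hs (by omega) (by omega)) (MT_L' hs (by omega) (by omega))
    (MT_Lne (by omega) (by omega) (by omega) (by omega) (by omega) (by omega))
    (MT_quad hs hr (by omega)) (MT_quad hs (by omega) (by omega))
  ext u T
  rw [Matrix.zero_apply]
  by_contra h0
  have q1 : w t κ r T = w t κ (r + 2) u := by
    by_contra hh; exact h0 (hom_apply p1 hh)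
  have q2 : w t κ (r + 1) T = w t κ (r + 1) u := by
    by_contra hh; exact h0 (hom_apply p2 hh)
  have q3 : w t κ (r + 2) T = w t κ r u := by
    by_contra hh; exact h0 (hom_apply p3 hh)
  have d1 : w t κ r T ≠ w t κ (r + 1) T := w_ne hs T hr (by omega) (by omega) (by omega)
  have d2 : w t κ r T ≠ w t κ (r + 2) T := w_ne hs T hr (by omega) (by omega) (by omega)
  have d3 : w t κ (r + 1) T ≠ w t κ (r + 2) T :=
    w_ne hs T (by omega) (by omega) (by omega) (by omega)
  have D : ∀ i k, (MD t κ i : Mat ℓ n K) * ML t κ k =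
    ML t κ k * MD t κ i := MD_L
  have R1 : (MB t κ r : Mat ℓ n K) * ML t κ r =
    ML t κ (r + 1) * MB t κ r := MB_L hr (by omega)
  have R2 : (MB t κ r : Mat ℓ n K) * ML t κ (r + 1) =
    ML t κ r * MB t κ r := MB_L' hr (by omega)
  have R3 : (MB t κ r : Mat ℓ n K) * ML t κ (r + 2) =
    ML t κ (r + 2) * MB t κ r := MB_Lne hr (by omega) (by omega) (by omega) (by omega) (by omega)
  have S1 : (MB t κ (r + 1) : Mat ℓ n K) * ML t κ r =
    ML t κ r * MB t κ (r + 1) :=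
    MB_Lne (by omega) (by omega) (by omega) (by omega) (by omega) (by omega)
  have S2 : (MB t κ (r + 1) : Mat ℓ n K) * ML t κ (r + 1) =
    ML t κ (r + 2) * MB t κ (r + 1) := MB_L (by omega) (by omega)
  have S3 : (MB t κ (r + 1) : Mat ℓ n K) * ML t κ (r + 2) =
    ML t κ (r + 1) * MB t κ (r + 1) := MB_L' (by omega) (by omega)
  -- vanishing of the terms of the wrong weight
  have n1 : w t κ r T ≠ w t κ r u := by rw [← q3]; exact d2
  have n2 : w t κ (r + 2) T ≠ w t κ (r + 2) u := by rw [← q1]; exact d2.symm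
  have n3 : w t κ r T ≠ w t κ (r + 1) u := by rw [← q2]; exact d1
  have n4 : w t κ (r + 2) T ≠ w t κ (r + 1) u := by rw [← q2]; exact d3.symm
  have z1 := hom_apply (hom_mul (D r r) (hom_mul (D (r + 1) r) (D r r))) n1
  have z2 := hom_apply (hom_mul (D r _) (hom_mul (D (r + 1) _) R3)) n2
  have z3 := hom_apply (hom_mul (D r _) (hom_mul S1 (D r _))) n1
  have z4 := hom_apply (hom_mul R3 (hom_mul (D (r + 1) _) (D r _))) n2
  have z5 := hom_apply (hom_mul R3 (hom_mul (D (r + 1) _) R3)) n2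
  have z6 := hom_apply (hom_mul (D r _) (hom_mul S3 R3)) n4
  have z7 := hom_apply (hom_mul R1 (hom_mul S1 (D r _))) n3
  have y1 := hom_apply (hom_mul (D (r + 1) r) (hom_mul (D r r) (D (r + 1) r))) n1
  have y2 := hom_apply (hom_mul (D (r + 1) _) (hom_mul (D r _) S1)) n1
  have y3 := hom_apply (hom_mul (D (r + 1) _) (hom_mul R3 (D (r + 1) _))) n2
  have y4 := hom_apply (hom_mul S1 (hom_mul (D r _) (D (r + 1) _))) n1
  have y5 := hom_apply (hom_mul S1 (hom_mul (D r _) S1)) n1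
  have y6 := hom_apply (hom_mul (D (r + 1) _) (hom_mul R1 S1)) n3
  have y7 := hom_apply (hom_mul S3 (hom_mul R3 (D (r + 1) _))) n4
  have b := congrFun (congrFun (MB_braid (t := t) (κ := κ) (ℓ := ℓ) (K := K) hr hn) u) T
  apply h0
  have : (MT t κ r * MT t κ (r + 1) * MT t κ r - MT t κ (r + 1) * MT t κ r * MT t κ (r + 1) :
      Mat ℓ n K) =
      MD t κ r * (MD t κ (r + 1) * MD t κ r) + MD t κ r * (MD t κ (r + 1) * MB t κ r) +
      MD t κ r * (MB t κ (r + 1) * MD t κ r) + MB t κ r * (MD t κ (r + 1) * MD t κ r) +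
      MB t κ r * (MD t κ (r + 1) * MB t κ r) + MD t κ r * (MB t κ (r + 1) * MB t κ r) +
      MB t κ r * (MB t κ (r + 1) * MD t κ r) + MB t κ r * (MB t κ (r + 1) * MB t κ r) -
      (MD t κ (r + 1) * (MD t κ r * MD t κ (r + 1)) +
      MD t κ (r + 1) * (MD t κ r * MB t κ (r + 1)) +
      MD t κ (r + 1) * (MB t κ r * MD t κ (r + 1)) +
      MB t κ (r + 1) * (MD t κ r * MD t κ (r + 1)) +
      MB t κ (r + 1) * (MD t κ r * MB t κ (r + 1)) +
      MD t κ (r + 1) * (MB t κ r * MB t κ (r + 1)) +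
      MB t κ (r + 1) * (MB t κ r * MD t κ (r + 1)) +
      MB t κ (r + 1) * (MB t κ r * MB t κ (r + 1))) := by
    rw [MT, MT]; noncomm_ring
  rw [this]
  simp only [Matrix.add_apply, Matrix.sub_apply]
  rw [z1, z2, z3, z4, z5, z6, z7, y1, y2, y3, y4, y5, y6, y7, b]
  ring

end braid

end SN

end Paper

open scoped BigOperators
open scoped Classical

namespace Paper

namespace SN

open StdTableau

variable {ℓ n : ℕ} {K : Type*} [Field K] {t : Kˣ} {κ : ℕ → ℤ}

/-! ## The seminormal representation -/

lemma w_one (T : StdTableau ℓ n) (hn : 1 ≤ n) : ∃ l < ℓ, w t κ 1 T = qint (t : K) (κ l) := by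
  have h := T.node_spec le_rfl hn
  have hc := T.comp_lt h.1
  refine ⟨(T.node 1).1, hc, ?_⟩
  rw [w, content_eq]
  generalize T.node 1 = A at *
  obtain ⟨l, i, j⟩ := A
  have h1 := T.entry_mono h.1 (Nat.zero_le i) (Nat.zero_le j)
  have h2 := (T.mem_diag_iff _).1 (T.diag_lower h.1 (Nat.zero_le i) (Nat.zero_le j))
  have hi : i = 0 := by omega
  have hj : j = 0 := by omega
  subst hi
  subst hj
  simp [ncont]

lemma ML_cyc (hn : 1 ≤ n) : ((List.range ℓ).map fun l =>
    (ML t κ 1 : Mat ℓ n K) - algebraMap K _ (qintU t (κ l))).prod = 0 := by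
  have h1 : ((List.range ℓ).map fun l =>
      (ML t κ 1 : Mat ℓ n K) - algebraMap K _ (qintU t (κ l))) =
      ((List.range ℓ).map fun l => (fun T : StdTableau ℓ n => w t κ 1 T - qint (t : K) (κ l))).map
        (Matrix.diagonalAlgHom K) := by
    rw [List.map_map]
    apply List.map_congr_left
    intro l _
    simp only [Function.comp, Matrix.diagonalAlgHom_apply, ML, Matrix.algebraMap_eq_diagonal,
      Matrix.diagonal_sub, qintU_eq]
    rfl
  rw [h1, ← map_list_prod]
  have h2 : ((List.range ℓ).map fun l =>
      (fun T : StdTableau ℓ n => w t κ 1 T - qint (t : K) (κ l))).prod = 0 := by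
    funext T
    obtain ⟨l, hl, hw⟩ := w_one (t := t) (κ := κ) T hn
    refine Eq.trans (Pi.evalMonoidHom_apply (fun _ : StdTableau ℓ n => K) T _).symm ?_
    rw [map_list_prod, List.map_map, Pi.zero_apply, List.prod_eq_zero_iff, List.mem_map]
    exact ⟨l, List.mem_range.2 hl, by simp [hw]⟩
  rw [h2, map_zero]

variable (t κ) in
/-- Images of the generators. -/
noncomputable def genMat : HeckeGen n → Mat ℓ n K
  | HeckeGen.L k => ML t κ (k.1 + 1)
  | HeckeGen.T r => MT t κ (r.1 + 1)

lemma rep_rel (hs : SeparatesF t n ℓ κ) {x y : FreeAlgebra K (HeckeGen n)}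
    (h : HeckeRel K t n ℓ κ x y) :
    FreeAlgebra.lift K (genMat t κ : _ → Mat ℓ n K) x =
      FreeAlgebra.lift K (genMat t κ : _ → Mat ℓ n K) y := by
  have fL : ∀ k : Fin n, FreeAlgebra.lift K (genMat t κ : _ → Mat ℓ n K) (hL K k) =
      ML t κ (k.1 + 1) := fun k => by simp [hL, genMat]
  have fT : ∀ r : Fin (n - 1), FreeAlgebra.lift K (genMat t κ : _ → Mat ℓ n K) (hT K r) =
      MT t κ (r.1 + 1) := fun k => by simp [hT, genMat]
  cases h with
  | cyc h =>
    rw [map_list_prod, List.map_map, map_zero, ← ML_cyc (t := t) (κ := κ) h]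
    congr 1
    apply List.map_congr_left
    intro l _
    simp only [Function.comp, map_sub, fL, AlgHom.commutes]
  | quad r =>
    have hr := r.2
    have := MT_quad (K := K) hs (show 1 ≤ r.1 + 1 by omega) (show r.1 + 1 + 1 ≤ n by omega)
    simp only [map_mul, map_add, map_sub, map_one, fT, AlgHom.commutes, map_zero]
    rw [Algebra.algebraMap_eq_smul_one, add_mul, mul_sub, this, one_mul, mul_smul_comm, mul_one]
    module
  | LL k m => simp only [map_mul, fL]; exact ML_L _ _
  | TTfar r s h =>
    have hr := r.2
    have hs' := s.2
    simp only [map_mul, fT]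
    exact MT_far (by omega) (by omega) (by omega) (by omega) (by omega)
  | braid r s h =>
    have hr := r.2
    have hs' := s.2
    simp only [map_mul, fT, h]
    exact MT_braid (by omega) (by omega) hs
  | TL r k h =>
    have hr := r.2
    have hk := k.2
    simp only [map_mul, fT, fL]
    exact MT_Lne (by omega) (by omega) (by omega) (by omega) (by omega) (by omega)
  | LT r =>
    have hr := r.2
    simp only [map_mul, map_add, map_sub, map_one, fT, fL, AlgHom.commutes, pR, pL]
    rw [MT_L hs (by omega) (by omega), Algebra.algebraMap_eq_smul_one, mul_add, mul_sub,
      mul_smul_comm, mul_one]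
    module

/-- The seminormal representation. -/
noncomputable def rep (hs : SeparatesF t n ℓ κ) : CycHecke K t n ℓ κ →ₐ[K] Mat ℓ n K :=
  RingQuot.liftAlgHom K ⟨FreeAlgebra.lift K (genMat t κ), fun _ _ h => rep_rel hs h⟩

lemma rep_L (hs : SeparatesF t n ℓ κ) (k : Fin n) :
    rep hs (Lgen K t n ℓ κ k) = ML t κ (k.1 + 1) := by
  simp [rep, Lgen, hL, genMat]

lemma rep_T (hs : SeparatesF t n ℓ κ) (k : Fin (n - 1)) :
    rep hs (Tgen K t n ℓ κ k) = MT t κ (k.1 + 1) := by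
  simp [rep, Tgen, hT, genMat]

lemma idem_mem (hs : SeparatesF t n ℓ κ) (T : StdTableau ℓ n) :
    Matrix.single T T (1 : K) ∈ (rep hs).range := by
  let B : Subalgebra K (StdTableau ℓ n → K) := (rep hs).range.comap (Matrix.diagonalAlgHom K)
  have hw : ∀ k, 1 ≤ k → k ≤ n → (w t κ k : StdTableau ℓ n → K) ∈ B := by
    intro k h1 h2
    refine ⟨Lgen K t n ℓ κ ⟨k - 1, by omega⟩, ?_⟩
    have := rep_L hs ⟨k - 1, by omega⟩
    simp only [Nat.sub_add_cancel h1] at this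
    exact this
  have hex : ∀ S, S ≠ T → ∃ k, (1 ≤ k ∧ k ≤ n) ∧ w t κ k S ≠ w t κ k T := by
    intro S hS
    by_contra hh
    push Not at hh
    exact hS (weight_inj hs fun k h1 h2 => hh k ⟨h1, h2⟩)
  choose! k hk1 hk2 using hex
  have hm : ∏ S ∈ Finset.univ.erase T, ((w t κ (k S) T - w t κ (k S) S)⁻¹ •
      ((w t κ (k S) : StdTableau ℓ n → K) - algebraMap K _ (w t κ (k S) S))) ∈ B := by
    apply Subalgebra.prod_mem
    intro S hS
    have hS' := Finset.ne_of_mem_erase hS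
    exact B.smul_mem (B.sub_mem (hw _ (hk1 S hS').1 (hk1 S hS').2) (B.algebraMap_mem _)) _
  have he : ∏ S ∈ Finset.univ.erase T, ((w t κ (k S) T - w t κ (k S) S)⁻¹ •
      ((w t κ (k S) : StdTableau ℓ n → K) - algebraMap K _ (w t κ (k S) S))) = Pi.single T 1 := by
    funext U
    rw [Finset.prod_apply]
    simp only [Pi.smul_apply, Pi.sub_apply, Pi.algebraMap_apply, Algebra.algebraMap_self,
      RingHom.id_apply, smul_eq_mul]
    by_cases hU : U = T
    · subst hU
      rw [Pi.single_eq_same]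
      apply Finset.prod_eq_one
      intro S hS
      exact inv_mul_cancel₀ (sub_ne_zero.2 (hk2 S (Finset.ne_of_mem_erase hS)).symm)
    · rw [Pi.single_eq_of_ne hU]
      exact Finset.prod_eq_zero (Finset.mem_erase.2 ⟨hU, Finset.mem_univ U⟩) (by simp)
  rw [he] at hm
  have : Matrix.diagonalAlgHom K (Pi.single T (1 : K)) ∈ (rep hs).range := hm
  rwa [Matrix.diagonalAlgHom_apply, Matrix.diagonal_single] at this

lemma one_add_ca_ne (hs : SeparatesF t n ℓ κ) {V T : StdTableau ℓ n} {r : ℕ} (h1 : 1 ≤ r)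
    (h2 : r + 1 ≤ n) (h : IsSwap r V T) : 1 + ca t κ r T ≠ 0 := by
  intro h0
  have e1 := ca_mul hs T h1 h2
  have hne := h.weight_ne hs h1 h2 1 (Or.inl rfl)
  apply hne
  rw [qint_succ _ t.ne_zero]
  have e2 : ca t κ r T = -1 := by linear_combination h0
  rw [e2] at e1
  simp only [w] at e1
  linear_combination e1

lemma single_mem (hs : SeparatesF t n ℓ κ) {S T : StdTableau ℓ n} (h : S.shape = T.shape) :
    Matrix.single S T (1 : K) ∈ (rep hs).range := by
  refine connected (fun S T => Matrix.single S T (1 : K) ∈ (rep hs).range) (idem_mem hs) ?_ ?_ h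
  · intro S T U h1 h2
    have := (rep hs).range.mul_mem h1 h2
    rwa [Matrix.single_mul_single_same, one_mul] at this
  · intro r h1 h2 S T hsw
    have hT : MT t κ r ∈ (rep hs).range :=
      ⟨Tgen K t n ℓ κ ⟨r - 1, by omega⟩, by
        have := rep_T hs ⟨r - 1, by omega⟩
        simp only [Nat.sub_add_cancel h1] at this
        exact this⟩
    have h3 := (rep hs).range.mul_mem ((rep hs).range.mul_mem (idem_mem hs S) hT) (idem_mem hs T)
    rw [Matrix.single_mul_mul_single, one_mul, mul_one] at h3
    have hne : S ≠ T := by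
      rintro rfl
      exact w_ne hs S h1 (Nat.lt_succ_self r) (by omega) h2 (w_swap hsw h1 h2).1
    have h4 : MT t κ r S T = 1 + ca t κ r T := by
      rw [MT, Matrix.add_apply, MB_apply, if_pos hsw, MD, Matrix.diagonal_apply_ne _ hne, zero_add]
    rw [h4] at h3
    have h5 := (rep hs).range.smul_mem h3 (1 + ca t κ r T)⁻¹
    rwa [Matrix.smul_single, smul_eq_mul, inv_mul_cancel₀ (one_add_ca_ne hs h1 h2 hsw)] at h5

end SN

end Paper

open scoped BigOperators
open scoped Classical

namespace Paper

/-! ## A spanning set of the cyclotomic Hecke algebra -/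

/-- Elements of an algebra satisfying the relations of the cyclotomic Hecke algebra. -/
structure Hk {K A : Type*} [Field K] [Ring A] [Algebra K A] (q : K) (n ℓ : ℕ)
    (L T : ℕ → A) : Prop where
  LL : ∀ i j, i < n → j < n → L i * L j = L j * L i
  quad : ∀ i, i + 1 < n → T i * T i = (q - 1) • T i + q • (1 : A)
  far : ∀ i j, i + 1 < n → j + 1 < n → (i + 1 < j ∨ j + 1 < i) → T i * T j = T j * T i
  braid : ∀ i, i + 2 < n → T i * T (i + 1) * T i = T (i + 1) * T i * T (i + 1)
  TL : ∀ i k, i + 1 < n → k < n → k ≠ i → k ≠ i + 1 → T i * L k = L k * T i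
  LT : ∀ i, i + 1 < n → L (i + 1) * T i = T i * L i + ((q - 1) • L (i + 1) + 1)
  cyc : 0 < n → L 0 ^ ℓ ∈ Submodule.span K ((fun a => L 0 ^ a) '' Set.Iio ℓ)

namespace Hk

variable {K A : Type*} [Field K] [Ring A] [Algebra K A] {q : K} {n ℓ : ℕ} {L T : ℕ → A}

variable (T) in
/-- `C j d = T_{j+d-1} ⋯ T_j`. -/
def C (j : ℕ) : ℕ → A
  | 0 => 1
  | d + 1 => T (j + d) * C j d

lemma C_succ' (j d : ℕ) : C T j (d + 1) = C T (j + 1) d * T j := by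
  induction d with
  | zero => simp [C]
  | succ d ih =>
    rw [C, ih, C, mul_assoc, show j + (d + 1) = j + 1 + d by ring]

lemma C_comm {x : A} {j d : ℕ} (h : ∀ m, j ≤ m → m < j + d → T m * x = x * T m) :
    C T j d * x = x * C T j d := by
  induction d with
  | zero => simp [C]
  | succ d ih =>
    rw [C, mul_assoc, ih (fun m h1 h2 => h m h1 (by omega)), ← mul_assoc,
      h _ (by omega) (by omega), mul_assoc]

lemma C_T (H : Hk q n ℓ L T) {i j d : ℕ} (h1 : j ≤ i) (h2 : i + 1 < j + d) (hn : j + d < n) :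
    C T j d * T (i + 1) = T i * C T j d := by
  induction d with
  | zero => omega
  | succ d ih =>
    by_cases h : i + 1 < j + d
    · rw [C, mul_assoc, ih h (by omega), ← mul_assoc, ← mul_assoc,
        H.far (j + d) i (by omega) (by omega) (by omega)]
    · obtain ⟨e, rfl⟩ : ∃ e, d = e + 1 := ⟨d - 1, by omega⟩
      have hi : i = j + e := by omega
      subst hi
      have hc : C T j e * T (j + e + 1) = T (j + e + 1) * C T j e :=
        C_comm fun m h3 h4 => H.far _ _ (by omega) (by omega) (by omega)
      rw [C, C, show j + (e + 1) = j + e + 1 by ring, mul_assoc, mul_assoc, hc, ← mul_assoc,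
        ← mul_assoc, ← H.braid (j + e) (by omega), mul_assoc, mul_assoc]

variable (K L T) in
/-- The subalgebra generated by the first generators. -/
def B (k : ℕ) : Subalgebra K A :=
  Algebra.adjoin K ({x | ∃ i < k, x = L i} ∪ {x | ∃ i, i + 1 < k ∧ x = T i})

lemma L_mem {i k : ℕ} (h : i < k) : L i ∈ B K L T k :=
  Algebra.subset_adjoin (Or.inl ⟨i, h, rfl⟩)

lemma T_mem {i k : ℕ} (h : i + 1 < k) : T i ∈ B K L T k :=
  Algebra.subset_adjoin (Or.inr ⟨i, h, rfl⟩)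

variable (L T) in
/-- The coset representatives. -/
noncomputable def U (ℓ k : ℕ) : Finset A :=
  (Finset.range (k + 1) ×ˢ Finset.range ℓ).image fun p => C T p.1 (k - p.1) * L p.1 ^ p.2

variable (K L T) in
/-- The module to be shown to be the whole of `B (k+1)`. -/
noncomputable def M (ℓ k : ℕ) : Submodule K A :=
  Subalgebra.toSubmodule (B K L T k) * Submodule.span K (U L T ℓ k : Set A)

lemma mul_memM {k : ℕ} {b x : A} (hb : b ∈ B K L T k) (hx : x ∈ M K L T ℓ k) :
    b * x ∈ M K L T ℓ k := by
  have h : b * x ∈ Subalgebra.toSubmodule (B K L T k) * M K L T ℓ k :=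
    Submodule.mul_mem_mul hb hx
  rw [M, ← mul_assoc, (Subalgebra.isIdempotentElem_toSubmodule _).eq] at h
  exact h

lemma u_memM {k j d a : ℕ} (hk : j + d = k) (ha : a < ℓ) : C T j d * L j ^ a ∈ M K L T ℓ k := by
  rw [← one_mul (C T j d * L j ^ a)]
  refine Submodule.mul_mem_mul (B K L T k).one_mem (Submodule.subset_span ?_)
  rw [U, Finset.mem_coe, Finset.mem_image]
  exact ⟨(j, a), by simp [ha]; omega, by simp [← hk]⟩

lemma pow_T (H : Hk q n ℓ L T) {i : ℕ} (hi : i + 1 < n) (a : ℕ) :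
    L (i + 1) ^ a * T i - T i * L i ^ a ∈
      Submodule.span K {x | ∃ b c, b ≤ a ∧ x = L (i + 1) ^ b * L i ^ c} := by
  induction a with
  | zero => simp
  | succ a ih =>
    have e : L (i + 1) ^ (a + 1) * T i - T i * L i ^ (a + 1) =
        L (i + 1) * (L (i + 1) ^ a * T i - T i * L i ^ a) +
          ((q - 1) • (L (i + 1) ^ 1 * L i ^ a) + L (i + 1) ^ 0 * L i ^ a) := by
      have h := H.LT i hi
      have : T i * L i ^ (a + 1) = (L (i + 1) * T i - ((q - 1) • L (i + 1) + 1)) * L i ^ a := by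
        rw [h, add_sub_cancel_right, pow_succ', mul_assoc]
      rw [this, pow_succ', mul_sub, sub_mul, add_mul, pow_one, pow_zero, smul_mul_assoc]
      simp only [mul_assoc]
      abel
    rw [e]
    refine Submodule.add_mem _ ?_ (Submodule.add_mem _ (Submodule.smul_mem _ _
      (Submodule.subset_span ⟨1, a, by omega, rfl⟩)) (Submodule.subset_span ⟨0, a, by omega, rfl⟩))
    generalize L (i + 1) ^ a * T i - T i * L i ^ a = y at ih
    induction ih using Submodule.span_induction with
    | mem x hx =>
      obtain ⟨b, c, hb, rfl⟩ := hx
      exact Submodule.subset_span ⟨b + 1, c, by omega, by rw [pow_succ', mul_assoc]⟩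
    | zero => simp
    | add x y _ _ hx hy => rw [mul_add]; exact Submodule.add_mem _ hx hy
    | smul c x _ hx => rw [mul_smul_comm]; exact Submodule.smul_mem _ _ hx

/-- Elements of the span in `pow_T`, after multiplication. -/
lemma span_mem {S : Submodule K A} {i a : ℕ} {f : A →ₗ[K] A}
    (h : ∀ b c, b ≤ a → f (L (i + 1) ^ b * L i ^ c) ∈ S) {x : A}
    (hx : x ∈ Submodule.span K {x | ∃ b c, b ≤ a ∧ x = L (i + 1) ^ b * L i ^ c}) : f x ∈ S := by
  have : Submodule.span K {x | ∃ b c, b ≤ a ∧ x = L (i + 1) ^ b * L i ^ c} ≤ S.comap f := by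
    rw [Submodule.span_le]
    rintro x ⟨b, c, hb, rfl⟩
    exact h b c hb
  exact this hx

lemma C_L (H : Hk q n ℓ L T) {i j d : ℕ} (h1 : i < j) (hn : j + d < n) (c : ℕ) :
    C T j d * L i ^ c = L i ^ c * C T j d := by
  apply C_comm
  intro m h3 h4
  have : Commute (T m) (L i) := H.TL m i (by omega) (by omega) (by omega) (by omega)
  exact (this.pow_right c).eq

lemma LL_pow (H : Hk q n ℓ L T) {i j : ℕ} (hi : i < n) (hj : j < n) (b c : ℕ) :
    L i ^ b * L j ^ c = L j ^ c * L i ^ b :=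
  ((show Commute (L i) (L j) from H.LL i j hi hj).pow_pow b c).eq

lemma CLL_mem (H : Hk q n ℓ L T) {k i d b : ℕ} (hk : i + 1 + d = k) (hkn : k < n) (hb : b < ℓ)
    (c : ℕ) : C T (i + 1) d * (L (i + 1) ^ b * L i ^ c) ∈ M K L T ℓ k := by
  rw [H.LL_pow (by omega) (by omega), ← mul_assoc, H.C_L (by omega) (by omega), mul_assoc]
  exact mul_memM (Subalgebra.pow_mem _ (L_mem (by omega)) _) (u_memM hk hb)

lemma case2 (H : Hk q n ℓ L T) {k i d a : ℕ} (hk : i + 1 + d = k) (hkn : k < n) (ha : a < ℓ) :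
    C T (i + 1) d * L (i + 1) ^ a * T i ∈ M K L T ℓ k := by
  have h1 := H.pow_T (show i + 1 < n by omega) a
  have h2 : C T (i + 1) d * L (i + 1) ^ a * T i =
      C T i (d + 1) * L i ^ a +
        LinearMap.mulLeft K (C T (i + 1) d) (L (i + 1) ^ a * T i - T i * L i ^ a) := by
    rw [C_succ', LinearMap.mulLeft_apply, mul_sub]
    simp only [mul_assoc]
    abel
  rw [h2]
  refine Submodule.add_mem _ (u_memM (by omega) ha) (span_mem ?_ h1)
  intro b c hb
  exact H.CLL_mem hk hkn (by omega) c

lemma case3 (H : Hk q n ℓ L T) {k i d a : ℕ} (hk : i + 1 + d = k) (hkn : k < n) (ha : a < ℓ) :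
    C T i (d + 1) * L i ^ a * T i ∈ M K L T ℓ k := by
  have h1 := H.pow_T (show i + 1 < n by omega) a
  have h2 : C T i (d + 1) * L i ^ a * T i =
      ((q - 1) • (C T (i + 1) d * L (i + 1) ^ a * T i) + q • (C T (i + 1) d * L (i + 1) ^ a)) -
        (LinearMap.mulRight K (T i) ∘ₗ LinearMap.mulLeft K (C T (i + 1) d))
          (L (i + 1) ^ a * T i - T i * L i ^ a) := by
    have e : C T (i + 1) d * (L (i + 1) ^ a * (T i * T i)) =
      ((q - 1) • (C T (i + 1) d * L (i + 1) ^ a * T i) + q • (C T (i + 1) d * L (i + 1) ^ a)) := by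
      rw [H.quad i (by omega)]
      simp only [mul_add, mul_smul_comm, mul_one, mul_assoc]
    rw [← e, C_succ', LinearMap.comp_apply, LinearMap.mulLeft_apply, LinearMap.mulRight_apply,
      mul_sub, sub_mul]
    simp only [mul_assoc]
    abel
  rw [h2]
  refine Submodule.sub_mem _ (Submodule.add_mem _ (Submodule.smul_mem _ _ (H.case2 hk hkn ha))
    (Submodule.smul_mem _ _ (u_memM hk ha))) (span_mem ?_ h1)
  intro b c hb
  rw [LinearMap.comp_apply, LinearMap.mulLeft_apply, LinearMap.mulRight_apply,
    H.LL_pow (by omega) (by omega), ← mul_assoc (C T (i + 1) d), H.C_L (by omega) (by omega),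
    mul_assoc, mul_assoc]
  refine mul_memM (Subalgebra.pow_mem _ (L_mem (by omega)) _) ?_
  rw [← mul_assoc]
  exact H.case2 hk hkn (by omega)

lemma uT_mem (H : Hk q n ℓ L T) {k i j d a : ℕ} (hk : j + d = k) (hkn : k < n) (ha : a < ℓ)
    (hi : i < k) : C T j d * L j ^ a * T i ∈ M K L T ℓ k := by
  rcases lt_trichotomy i j with h | h | h
  · by_cases h' : i + 1 = j
    · subst h'
      exact H.case2 hk hkn ha
    · have e1 : Commute (T i) (L j) := H.TL i j (by omega) (by omega) (by omega) (by omega)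
      have e2 : C T j d * T i = T i * C T j d :=
        C_comm fun m h3 h4 => H.far _ _ (by omega) (by omega) (by omega)
      rw [mul_assoc, ← (e1.pow_right a).eq, ← mul_assoc, e2, mul_assoc]
      exact mul_memM (T_mem (by omega)) (u_memM hk ha)
  · subst h
    obtain ⟨e, rfl⟩ : ∃ e, d = e + 1 := ⟨d - 1, by omega⟩
    exact H.case3 (by omega) hkn ha
  · obtain ⟨i, rfl⟩ : ∃ e, i = e + 1 := ⟨i - 1, by omega⟩
    have e1 : Commute (T (i + 1)) (L j) := H.TL _ j (by omega) (by omega) (by omega) (by omega)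
    rw [mul_assoc, ← (e1.pow_right a).eq, ← mul_assoc, H.C_T (by omega) (by omega) (by omega),
      mul_assoc]
    exact mul_memM (T_mem (by omega)) (u_memM hk ha)

lemma uL_mem (H : Hk q n ℓ L T) {k j d a : ℕ} (hk : j + d = k) (hkn : k < n) (ha : a < ℓ) :
    C T j d * L j ^ a * L 0 ∈ M K L T ℓ k := by
  rcases Nat.eq_zero_or_pos j with h | h
  · subst h
    rw [mul_assoc, ← pow_succ]
    rcases Nat.lt_or_ge (a + 1) ℓ with h | h
    · exact u_memM hk h
    · have : a + 1 = ℓ := by omega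
      rw [this]
      have h1 := H.cyc (by omega)
      have h2 : Submodule.span K ((fun a => L 0 ^ a) '' Set.Iio ℓ) ≤
          (M K L T ℓ k).comap (LinearMap.mulLeft K (C T 0 d)) := by
        rw [Submodule.span_le]
        rintro x ⟨a, ha, rfl⟩
        exact u_memM hk ha
      exact h2 h1
  · have e := H.CLL_mem (i := 0) (d := 0) (k := 1) (b := 0)
    rw [mul_assoc]
    have e2 := H.C_L h (d := d) (by omega) 1
    have e3 := H.LL_pow (show j < n by omega) (show 0 < n by omega) a 1
    rw [pow_one] at e2 e3
    rw [e3, ← mul_assoc, e2, mul_assoc]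
    exact mul_memM (L_mem (by omega)) (u_memM hk ha)

lemma M_ind {k : ℕ} {g : A} (h : ∀ j d a, j + d = k → a < ℓ → C T j d * L j ^ a * g ∈ M K L T ℓ k)
    {x : A} (hx : x ∈ M K L T ℓ k) : x * g ∈ M K L T ℓ k := by
  have hU : ∀ u ∈ Submodule.span K (U L T ℓ k : Set A), u * g ∈ M K L T ℓ k := by
    intro u hu
    have : Submodule.span K (U L T ℓ k : Set A) ≤
        (M K L T ℓ k).comap (LinearMap.mulRight K g) := by
      rw [Submodule.span_le]
      intro u hu
      rw [U, Finset.mem_coe, Finset.mem_image] at hu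
      obtain ⟨⟨j, a⟩, hp, rfl⟩ := hu
      simp only [Finset.mem_product, Finset.mem_range] at hp
      exact h j (k - j) a (by omega) hp.2
    exact this hu
  rw [M] at hx
  induction hx using Submodule.mul_induction_on' with
  | mem_mul_mem m hm u hu =>
    rw [mul_assoc]
    exact mul_memM hm (hU u hu)
  | add x _ y _ hx hy => rw [add_mul]; exact Submodule.add_mem _ hx hy

lemma B_le (H : Hk q n ℓ L T) (hq : q ≠ 0) (hℓ : 1 ≤ ℓ) {k : ℕ} (hk : k < n) :
    Subalgebra.toSubmodule (B K L T (k + 1)) ≤ M K L T ℓ k := by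
  have hT : ∀ i, i < k → ∀ x ∈ M K L T ℓ k, x * T i ∈ M K L T ℓ k := by
    intro i hi x hx
    exact M_ind (fun j d a h1 h2 => H.uT_mem h1 hk h2 hi) hx
  have hL : ∀ i, i ≤ k → ∀ x ∈ M K L T ℓ k, x * L i ∈ M K L T ℓ k := by
    intro i
    induction i with
    | zero =>
      intro _ x hx
      exact M_ind (fun j d a h1 h2 => H.uL_mem h1 hk h2) hx
    | succ i ih =>
      intro hi x hx
      have e1 := H.LT i (by omega)
      have e2 := H.quad i (by omega)
      have e3 : q • L (i + 1) = T i * L i * T i + T i := by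
        have e4 : L (i + 1) * (T i * T i) = (T i * L i + ((q - 1) • L (i + 1) + 1)) * T i := by
          rw [← mul_assoc, e1]
        rw [e2, mul_add, add_mul, add_mul, mul_smul_comm, mul_smul_comm, smul_mul_assoc, one_mul,
          mul_one] at e4
        have := congrArg (fun y => y - (q - 1) • (L (i + 1) * T i)) e4
        rw [add_sub_cancel_left] at this
        rw [this]
        abel
      have e5 : L (i + 1) = q⁻¹ • (T i * L i * T i + T i) := by
        rw [← e3, smul_smul, inv_mul_cancel₀ hq, one_smul]
      rw [e5, mul_smul_comm, mul_add, ← mul_assoc, ← mul_assoc]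
      have h1 := hT i (by omega) x hx
      exact Submodule.smul_mem _ _ (Submodule.add_mem _ (hT i (by omega) _ (ih (by omega) _ h1)) h1)
  have h1 : (1 : A) ∈ M K L T ℓ k := by
    have := u_memM (K := K) (L := L) (T := T) (ℓ := ℓ) (k := k) (j := k) (d := 0) (a := 0) rfl
      (by omega)
    simpa [C] using this
  have key : ∀ b ∈ B K L T (k + 1), ∀ x ∈ M K L T ℓ k, x * b ∈ M K L T ℓ k := by
    intro b hb
    induction hb using Algebra.adjoin_induction with
    | mem b hb =>
      rcases hb with ⟨i, hi, rfl⟩ | ⟨i, hi, rfl⟩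
      · exact hL i (by omega)
      · exact hT i (by omega)
    | algebraMap c =>
      intro x hx
      rw [← Algebra.commutes, ← Algebra.smul_def]
      exact Submodule.smul_mem _ _ hx
    | add a b _ _ ha hb =>
      intro x hx
      rw [mul_add]
      exact Submodule.add_mem _ (ha x hx) (hb x hx)
    | mul a b _ _ ha hb =>
      intro x hx
      rw [← mul_assoc]
      exact hb _ (ha x hx)
  intro b hb
  have := key b hb 1 h1
  rwa [one_mul] at this

lemma span_bound (H : Hk q n ℓ L T) (hq : q ≠ 0) (hℓ : 1 ≤ ℓ) {k : ℕ} (hk : k ≤ n) :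
    ∃ S : Finset A, S.card ≤ ℓ ^ k * k.factorial ∧
      Subalgebra.toSubmodule (B K L T k) ≤ Submodule.span K (S : Set A) := by
  induction k with
  | zero =>
    refine ⟨{1}, by simp, ?_⟩
    have : B K L T 0 = ⊥ := by
      rw [B, eq_bot_iff, Algebra.adjoin_le_iff]
      rintro x (⟨i, hi, _⟩ | ⟨i, hi, _⟩) <;> omega
    rw [this, Algebra.toSubmodule_bot, Finset.coe_singleton, Submodule.one_eq_span]
  | succ k ih =>
    obtain ⟨S, hS1, hS2⟩ := ih (by omega)
    refine ⟨Finset.image₂ (fun x y => x * y) S (U L T ℓ k), ?_, ?_⟩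
    · refine (Finset.card_image₂_le _ _ _).trans ?_
      have hU : (U L T ℓ k).card ≤ (k + 1) * ℓ := by
        refine Finset.card_image_le.trans ?_
        simp
      calc S.card * (U L T ℓ k).card ≤ (ℓ ^ k * k.factorial) * ((k + 1) * ℓ) :=
            Nat.mul_le_mul hS1 hU
        _ = ℓ ^ (k + 1) * (k + 1).factorial := by
            rw [Nat.factorial_succ, pow_succ]; ring
    · refine (H.B_le hq hℓ (by omega)).trans ?_
      rw [M]
      refine (mul_le_mul' hS2 le_rfl).trans ?_
      rw [Submodule.span_mul_span, Finset.coe_image₂]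
      exact le_of_eq rfl

lemma finrank_bound (H : Hk q n ℓ L T) (hq : q ≠ 0) (hℓ : 1 ≤ ℓ) (htop : B K L T n = ⊤) :
    Module.Finite K A ∧ Module.finrank K A ≤ ℓ ^ n * n.factorial := by
  obtain ⟨S, h1, h2⟩ := H.span_bound hq hℓ le_rfl
  rw [htop, Algebra.top_toSubmodule, top_le_iff] at h2
  have hf : Module.Finite K A := ⟨⟨S, h2⟩⟩
  refine ⟨hf, ?_⟩
  rw [← finrank_top, ← h2]
  exact (finrank_span_finset_le_card S).trans h1

end Hk

end Paper

open scoped BigOperators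
open scoped Classical

namespace Paper

namespace SN

/-! ## The dimension bound for the cyclotomic Hecke algebra -/

lemma cyc_span {K A : Type*} [Field K] [Ring A] [Algebra K A] (x : A) (c : ℕ → K) (m : ℕ)
    (h : ((List.range m).map fun l => x - algebraMap K A (c l)).prod = 0) :
    x ^ m ∈ Submodule.span K ((fun a => x ^ a) '' Set.Iio m) := by
  have key : ∀ j : ℕ, x ^ j - ((List.range j).map fun l => x - algebraMap K A (c l)).prod ∈
      Submodule.span K ((fun a => x ^ a) '' Set.Iio j) := by
    intro j
    induction j with
    | zero => simp
    | succ j ih =>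
      have hmono : Submodule.span K ((fun a => x ^ a) '' Set.Iio j) ≤
          Submodule.span K ((fun a => x ^ a) '' Set.Iio (j + 1)) :=
        Submodule.span_mono (Set.image_mono fun a (ha : a < j) => (by
          show a < j + 1
          omega))
      have hx : ∀ y ∈ Submodule.span K ((fun a => x ^ a) '' Set.Iio j),
          y * x ∈ Submodule.span K ((fun a => x ^ a) '' Set.Iio (j + 1)) := by
        intro y hy
        induction hy using Submodule.span_induction with
        | mem y hy =>
          obtain ⟨a, ha, rfl⟩ := hy
          have ha' : a < j := ha
          refine Submodule.subset_span ⟨a + 1, ?_, pow_succ x a⟩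
          show a + 1 < j + 1
          omega
        | zero => simp
        | add y z _ _ hy hz => rw [add_mul]; exact Submodule.add_mem _ hy hz
        | smul k y _ hy => rw [smul_mul_assoc]; exact Submodule.smul_mem _ _ hy
      set P := ((List.range j).map fun l => x - algebraMap K A (c l)).prod with hP
      have hPmem : P ∈ Submodule.span K ((fun a => x ^ a) '' Set.Iio (j + 1)) := by
        have h1 : x ^ j ∈ Submodule.span K ((fun a => x ^ a) '' Set.Iio (j + 1)) :=
          Submodule.subset_span ⟨j, Nat.lt_succ_self j, rfl⟩
        have h2 := Submodule.sub_mem _ h1 (hmono ih)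
        rwa [sub_sub_cancel] at h2
      rw [List.range_succ, List.map_append, List.prod_append, ← hP]
      simp only [List.map_cons, List.map_nil, List.prod_cons, List.prod_nil, mul_one]
      have e : x ^ (j + 1) - P * (x - algebraMap K A (c j)) =
          (x ^ j - P) * x + c j • P := by
        rw [mul_sub, sub_mul, pow_succ, ← Algebra.commutes, ← Algebra.smul_def]
        abel
      rw [e]
      exact Submodule.add_mem _ (hx _ ih) (Submodule.smul_mem _ _ hPmem)
  have := key m
  rwa [h, sub_zero] at this

lemma quad_aux {K A : Type*} [Field K] [Ring A] [Algebra K A] (x : A) (q : K)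
    (h : x * x - q • x + (x - q • 1) = 0) : x * x = (q - 1) • x + q • (1 : A) := by
  rw [sub_smul, one_smul, ← sub_eq_zero, ← h]
  abel

lemma LT_aux {K A : Type*} [Field K] [Ring A] [Algebra K A] (x y z : A) (q : K)
    (h : y * x - q • y + y = z + 1) : y * x = z + ((q - 1) • y + 1) := by
  rw [← sub_eq_zero] at h
  rw [sub_smul, one_smul, ← sub_eq_zero, ← h]
  abel

variable {K : Type*} [Field K] {t : Kˣ} {n ℓ : ℕ} {κ : ℕ → ℤ}

variable (K t n ℓ κ) in
/-- The generators `L`, indexed by natural numbers. -/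
noncomputable def eL (i : ℕ) : CycHecke K t n ℓ κ :=
  if h : i < n then Lgen K t n ℓ κ ⟨i, h⟩ else 0

variable (K t n ℓ κ) in
/-- The generators `T`, indexed by natural numbers. -/
noncomputable def eT (i : ℕ) : CycHecke K t n ℓ κ :=
  if h : i < n - 1 then Tgen K t n ℓ κ ⟨i, h⟩ else 0

lemma rel_eq {x y : FreeAlgebra K (HeckeGen n)} (h : HeckeRel K t n ℓ κ x y) :
    RingQuot.mkAlgHom K (HeckeRel K t n ℓ κ) x = RingQuot.mkAlgHom K (HeckeRel K t n ℓ κ) y :=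
  RingQuot.mkAlgHom_rel K h

lemma eL_eq (k : Fin n) :
    RingQuot.mkAlgHom K (HeckeRel K t n ℓ κ) (hL K k) = eL K t n ℓ κ k.1 := by
  rw [eL, dif_pos k.2]; rfl

lemma eT_eq (k : Fin (n - 1)) :
    RingQuot.mkAlgHom K (HeckeRel K t n ℓ κ) (hT K k) = eT K t n ℓ κ k.1 := by
  rw [eT, dif_pos k.2]; rfl

lemma hk : Hk (t : K) n ℓ (eL K t n ℓ κ) (eT K t n ℓ κ) where
  LL i j hi hj := by
    have := rel_eq (HeckeRel.LL (R := K) (t := t) (n := n) (ℓ := ℓ) (κ := κ) ⟨i, hi⟩ ⟨j, hj⟩)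
    simpa only [map_mul, eL_eq] using this
  quad i hi := by
    have := rel_eq (HeckeRel.quad (R := K) (t := t) (n := n) (ℓ := ℓ) (κ := κ) ⟨i, by omega⟩)
    simp only [map_mul, map_add, map_sub, map_one, map_zero, eT_eq, AlgHom.commutes] at this
    rw [add_mul, mul_sub, one_mul, ← Algebra.commutes, ← Algebra.smul_def,
      Algebra.algebraMap_eq_smul_one] at this
    exact quad_aux _ _ this
  far i j hi hj h := by
    have := rel_eq (HeckeRel.TTfar (R := K) (t := t) (n := n) (ℓ := ℓ) (κ := κ)
      ⟨i, by omega⟩ ⟨j, by omega⟩ h)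
    simpa only [map_mul, eT_eq] using this
  braid i hi := by
    have := rel_eq (HeckeRel.braid (R := K) (t := t) (n := n) (ℓ := ℓ) (κ := κ)
      ⟨i, by omega⟩ ⟨i + 1, by omega⟩ rfl)
    simpa only [map_mul, eT_eq] using this
  TL i k hi hk h1 h2 := by
    have := rel_eq (HeckeRel.TL (R := K) (t := t) (n := n) (ℓ := ℓ) (κ := κ)
      ⟨i, by omega⟩ ⟨k, hk⟩ ⟨h1, h2⟩)
    simpa only [map_mul, eT_eq, eL_eq] using this
  LT i hi := by
    have := rel_eq (HeckeRel.LT (R := K) (t := t) (n := n) (ℓ := ℓ) (κ := κ) ⟨i, by omega⟩)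
    simp only [map_mul, map_add, map_sub, map_one, eT_eq, eL_eq, AlgHom.commutes, pL, pR] at this
    rw [mul_add, mul_sub, mul_one, ← Algebra.commutes, ← Algebra.smul_def] at this
    exact LT_aux _ _ _ _ this
  cyc hn := by
    have := rel_eq (HeckeRel.cyc (R := K) (t := t) (n := n) (ℓ := ℓ) (κ := κ) hn)
    rw [map_zero, map_list_prod, List.map_map] at this
    refine cyc_span _ (fun l => qintU t (κ l)) ℓ ?_
    rw [← this]
    congr 1
    refine List.map_congr_left fun l _ => ?_
    simp only [Function.comp, map_sub, eL_eq, AlgHom.commutes]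

lemma B_top : Hk.B K (eL K t n ℓ κ) (eT K t n ℓ κ) n = ⊤ := by
  have h1 : (⊤ : Subalgebra K (CycHecke K t n ℓ κ)) =
      (⊤ : Subalgebra K (FreeAlgebra K (HeckeGen n))).map
        (RingQuot.mkAlgHom K (HeckeRel K t n ℓ κ)) := by
    rw [Algebra.map_top, eq_comm, AlgHom.range_eq_top]
    exact RingQuot.mkAlgHom_surjective K _
  rw [h1, ← FreeAlgebra.adjoin_range_ι, AlgHom.map_adjoin]
  refine le_antisymm ?_ ?_
  · rw [← AlgHom.map_adjoin, FreeAlgebra.adjoin_range_ι, ← h1]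
    exact le_top
  · rw [Algebra.adjoin_le_iff]
    rintro _ ⟨_, ⟨g, rfl⟩, rfl⟩
    cases g with
    | L k =>
      have := eL_eq (t := t) (ℓ := ℓ) (κ := κ) (K := K) k
      rw [hL] at this
      rw [this]
      exact Hk.L_mem k.2
    | T k =>
      have := eT_eq (t := t) (ℓ := ℓ) (κ := κ) (K := K) k
      rw [hT] at this
      rw [this]
      exact Hk.T_mem (by omega)

lemma finrank_le (hℓ : 1 ≤ ℓ) : Module.Finite K (CycHecke K t n ℓ κ) ∧
    Module.finrank K (CycHecke K t n ℓ κ) ≤ ℓ ^ n * n.factorial :=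
  hk.finrank_bound t.ne_zero hℓ B_top

end SN

end Paper

open scoped BigOperators
open scoped Classical

namespace Paper

/-! ## Counting pairs of standard tableaux -/

/-- A finite set of nodes is the diagram of a multipartition. -/
def IsD (ℓ : ℕ) (D : Finset Node) : Prop :=
  (∀ A ∈ D, A.1 < ℓ) ∧ (∀ l r c, (l, r, c + 1) ∈ D → (l, r, c) ∈ D) ∧
    (∀ l r c, (l, r + 1, c) ∈ D → (l, r, c) ∈ D)

namespace IsD

variable {ℓ : ℕ} {D E : Finset Node}

lemma empty : IsD ℓ ∅ := ⟨by simp, by simp, by simp⟩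

lemma union (h : IsD ℓ D) (h' : IsD ℓ E) : IsD ℓ (D ∪ E) := by
  refine ⟨fun A hA => ?_, fun l r c hA => ?_, fun l r c hA => ?_⟩ <;>
    rw [Finset.mem_union] at *
  · exact hA.elim (h.1 A) (h'.1 A)
  · exact hA.imp (h.2.1 _ _ _) (h'.2.1 _ _ _)
  · exact hA.imp (h.2.2 _ _ _) (h'.2.2 _ _ _)

lemma inter (h : IsD ℓ D) (h' : IsD ℓ E) : IsD ℓ (D ∩ E) := by
  refine ⟨fun A hA => ?_, fun l r c hA => ?_, fun l r c hA => ?_⟩ <;>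
    rw [Finset.mem_inter] at *
  · exact h.1 A hA.1
  · exact hA.imp (h.2.1 _ _ _) (h'.2.1 _ _ _)
  · exact hA.imp (h.2.2 _ _ _) (h'.2.2 _ _ _)

lemma lower (h : IsD ℓ D) {l r c r' c' : ℕ} (hA : (l, r, c) ∈ D) (hr : r' ≤ r) (hc : c' ≤ c) :
    (l, r', c') ∈ D := by
  have h1 : ∀ d, (l, r, c' + d) ∈ D → (l, r, c') ∈ D := by
    intro d
    induction d with
    | zero => exact id
    | succ d ih => exact fun hd => ih (h.2.1 _ _ _ hd)
  have h2 : ∀ d, (l, r' + d, c') ∈ D → (l, r', c') ∈ D := by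
    intro d
    induction d with
    | zero => exact id
    | succ d ih => exact fun hd => ih (h.2.2 _ _ _ hd)
  apply h2 (r - r')
  rw [Nat.add_sub_cancel' hr]
  apply h1 (c - c')
  rwa [Nat.add_sub_cancel' hc]

lemma bound (h : IsD ℓ D) {A : Node} (hA : A ∈ D) : A.2.1 < D.card ∧ A.2.2 < D.card := by
  obtain ⟨l, r, c⟩ := A
  constructor
  · have : ((Finset.range (r + 1)).image fun i => ((l, i, c) : Node)) ⊆ D := by
      intro x hx
      obtain ⟨i, hi, rfl⟩ := Finset.mem_image.1 hx
      exact h.lower hA (by simpa [Nat.lt_succ_iff] using hi) le_rfl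
    have h2 := Finset.card_le_card this
    rw [Finset.card_image_of_injective _ (fun a b hab => by simpa using hab),
      Finset.card_range] at h2
    exact h2
  · have : ((Finset.range (c + 1)).image fun i => ((l, r, i) : Node)) ⊆ D := by
      intro x hx
      obtain ⟨i, hi, rfl⟩ := Finset.mem_image.1 hx
      exact h.lower hA le_rfl (by simpa [Nat.lt_succ_iff] using hi)
    have h2 := Finset.card_le_card this
    rw [Finset.card_image_of_injective _ (fun a b hab => by simpa using hab),
      Finset.card_range] at h2
    exact h2

end IsD

/-- The length of a row of a diagram. -/
noncomputable def rlen (D : Finset Node) (l r : ℕ) : ℕ :=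
  (D.filter fun A => A.1 = l ∧ A.2.1 = r).card

lemma mem_iff_rlen {ℓ : ℕ} {D : Finset Node} (h : IsD ℓ D) (l r c : ℕ) :
    (l, r, c) ∈ D ↔ c < rlen D l r := by
  have hcard : ∀ m, (∀ c, c < m → (l, r, c) ∈ D) → (∀ c, m ≤ c → (l, r, c) ∉ D) →
      rlen D l r = m := by
    intro m h1 h2
    have : (D.filter fun A => A.1 = l ∧ A.2.1 = r) =
        (Finset.range m).image fun i => ((l, r, i) : Node) := by
      ext ⟨l', r', c'⟩
      simp only [Finset.mem_filter, Finset.mem_image, Finset.mem_range, Prod.mk.injEq]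
      constructor
      · rintro ⟨h3, rfl, rfl⟩
        refine ⟨c', ?_, rfl, rfl, rfl⟩
        by_contra h4
        exact h2 c' (by omega) h3
      · rintro ⟨i, hi, rfl, rfl, rfl⟩
        exact ⟨h1 i hi, rfl, rfl⟩
    rw [rlen, this, Finset.card_image_of_injective _ (fun a b hab => by simpa using hab),
      Finset.card_range]
  have hex : ∃ m, (l, r, m) ∉ D := ⟨D.card, fun hm => lt_irrefl _ (h.bound hm).2⟩
  have hm := Nat.find_spec hex
  have := hcard (Nat.find hex) (fun c hc => not_not.1 (Nat.find_min hex hc))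
    (fun c hc hc' => hm (h.lower hc' le_rfl hc))
  rw [this]
  constructor
  · intro hc
    by_contra hc'
    exact hm (h.lower hc le_rfl (by omega))
  · intro hc
    exact not_not.1 (Nat.find_min hex hc)

/-- Addable nodes. -/
noncomputable def addN (ℓ : ℕ) (D : Finset Node) : Finset Node :=
  (Finset.range ℓ ×ˢ Finset.range (D.card + 1) ×ˢ Finset.range (D.card + 1)).filter
    fun A => A ∉ D ∧ IsD ℓ (insert A D)

/-- Removable nodes. -/
noncomputable def remN (ℓ : ℕ) (D : Finset Node) : Finset Node :=
  D.filter fun A => IsD ℓ (D.erase A)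

lemma mem_addN {ℓ : ℕ} {D : Finset Node} {A : Node} :
    A ∈ addN ℓ D ↔ A ∉ D ∧ IsD ℓ (insert A D) := by
  rw [addN, Finset.mem_filter, and_iff_right_iff_imp]
  rintro ⟨h1, h2⟩
  have h3 := h2.bound (Finset.mem_insert_self A D)
  have h4 := h2.1 A (Finset.mem_insert_self A D)
  rw [Finset.card_insert_of_notMem h1] at h3
  simp only [Finset.mem_product, Finset.mem_range]
  exact ⟨h4, h3.1, h3.2⟩

lemma mem_remN {ℓ : ℕ} {D : Finset Node} {A : Node} :
    A ∈ remN ℓ D ↔ A ∈ D ∧ IsD ℓ (D.erase A) := by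
  rw [remN, Finset.mem_filter]

lemma insert_row {ℓ : ℕ} {D : Finset Node} (h : IsD ℓ D) {l r : ℕ} (hl : l < ℓ)
    (hr : ∀ r', r' + 1 = r → rlen D l r < rlen D l r') : (l, r, rlen D l r) ∈ addN ℓ D := by
  rw [mem_addN]
  refine ⟨fun h1 => lt_irrefl _ ((mem_iff_rlen h _ _ _).1 h1), ?_, ?_, ?_⟩
  · intro A hA
    rcases Finset.mem_insert.1 hA with rfl | hA
    · exact hl
    · exact h.1 A hA
  · intro l' r' c hA
    rcases Finset.mem_insert.1 hA with hA | hA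
    · simp only [Prod.mk.injEq] at hA
      obtain ⟨rfl, rfl, hc⟩ := hA
      refine Finset.mem_insert_of_mem ((mem_iff_rlen h _ _ _).2 (by omega))
    · exact Finset.mem_insert_of_mem (h.2.1 _ _ _ hA)
  · intro l' r' c hA
    rcases Finset.mem_insert.1 hA with hA | hA
    · simp only [Prod.mk.injEq] at hA
      obtain ⟨rfl, hr', rfl⟩ := hA
      refine Finset.mem_insert_of_mem ((mem_iff_rlen h _ _ _).2 (hr _ hr'))
    · exact Finset.mem_insert_of_mem (h.2.2 _ _ _ hA)

lemma rem_row {ℓ : ℕ} {D : Finset Node} (h : IsD ℓ D) {l r c : ℕ} (hA : (l, r, c) ∈ remN ℓ D) :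
    c + 1 = rlen D l r ∧ rlen D l (r + 1) < rlen D l r := by
  rw [mem_remN] at hA
  have h1 : (l, r, c + 1) ∉ D := by
    intro hc
    have : (l, r, c + 1) ∈ D.erase (l, r, c) := Finset.mem_erase.2 ⟨by simp, hc⟩
    simpa using hA.2.2.1 _ _ _ this
  have h2 : (l, r + 1, c) ∉ D := by
    intro hc
    have : (l, r + 1, c) ∈ D.erase (l, r, c) := Finset.mem_erase.2 ⟨by simp, hc⟩
    simpa using hA.2.2.2 _ _ _ this
  have h3 := hA.1
  rw [mem_iff_rlen h] at h1 h2 h3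
  omega

lemma card_add_ge {ℓ : ℕ} {D : Finset Node} (h : IsD ℓ D) :
    (remN ℓ D).card + ℓ ≤ (addN ℓ D).card := by
  let f : Node → Node := fun A => (A.1, A.2.1 + 1, rlen D A.1 (A.2.1 + 1))
  let g : ℕ → Node := fun l => (l, 0, rlen D l 0)
  have hf : Set.InjOn f (remN ℓ D) := by
    rintro ⟨l, r, c⟩ hA ⟨l', r', c'⟩ hB hAB
    have h1 := rem_row h hA
    have h2 := rem_row h hB
    simp only [f, Prod.mk.injEq] at hAB
    obtain ⟨rfl, hr, _⟩ := hAB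
    have : r = r' := by omega
    subst this
    have : c = c' := by omega
    rw [this]
  have hg : Set.InjOn g (Finset.range ℓ) := by
    intro a _ b _ hab
    simp only [g, Prod.mk.injEq] at hab
    exact hab.1
  have hd : Disjoint ((remN ℓ D).image f) ((Finset.range ℓ).image g) := by
    rw [Finset.disjoint_left]
    intro x hx hx'
    obtain ⟨A, _, rfl⟩ := Finset.mem_image.1 hx
    obtain ⟨l, _, hl⟩ := Finset.mem_image.1 hx'
    simp [f, g] at hl
  have hsub : ((remN ℓ D).image f) ∪ ((Finset.range ℓ).image g) ⊆ addN ℓ D := by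
    refine Finset.union_subset ?_ ?_
    · intro x hx
      obtain ⟨⟨l, r, c⟩, hA, rfl⟩ := Finset.mem_image.1 hx
      refine insert_row h (h.1 _ (mem_remN.1 hA).1) fun r' hr' => ?_
      have hr2 : r' + 1 = r + 1 := hr'
      have : r' = r := by omega
      subst this
      exact (rem_row h hA).2
    · intro x hx
      obtain ⟨l, hl, rfl⟩ := Finset.mem_image.1 hx
      exact insert_row h (Finset.mem_range.1 hl) fun r' hr' => by omega
  have := Finset.card_le_card hsub
  rwa [Finset.card_union_of_disjoint hd, Finset.card_image_of_injOn hf,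
    Finset.card_image_of_injOn hg, Finset.card_range] at this

/-- The number of standard tableaux, recursively. -/
noncomputable def nTab (ℓ : ℕ) : ℕ → Finset Node → ℕ
  | 0, D => if D = ∅ then 1 else 0
  | k + 1, D => ∑ A ∈ remN ℓ D, nTab ℓ k (D.erase A)

/-- The number of up-down paths. -/
lemma nTab_up {ℓ : ℕ} (k : ℕ) : ∀ D : Finset Node, IsD ℓ D → D.card = k →
    ℓ * (k + 1) * nTab ℓ k D ≤ ∑ A ∈ addN ℓ D, nTab ℓ (k + 1) (insert A D) := by
  intro D hD hk
  -- the diagonal part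
  have hstep : ∀ A ∈ addN ℓ D, nTab ℓ (k + 1) (insert A D) =
      nTab ℓ k D + ∑ B ∈ (remN ℓ (insert A D)).erase A, nTab ℓ k ((insert A D).erase B) := by
    intro A hA
    have hA' := mem_addN.1 hA
    have : A ∈ remN ℓ (insert A D) := by
      rw [mem_remN, Finset.erase_insert hA'.1]
      exact ⟨Finset.mem_insert_self _ _, hD⟩
    rw [nTab, ← Finset.add_sum_erase _ _ this, Finset.erase_insert hA'.1]
  have hoff : ∑ B ∈ remN ℓ D, ∑ A ∈ (addN ℓ (D.erase B)).erase B,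
        nTab ℓ k (insert A (D.erase B)) ≤
      ∑ A ∈ addN ℓ D, ∑ B ∈ (remN ℓ (insert A D)).erase A, nTab ℓ k ((insert A D).erase B) := by
    rw [Finset.sum_sigma', Finset.sum_sigma']
    have hspec : ∀ x ∈ (remN ℓ D).sigma fun B => (addN ℓ (D.erase B)).erase B,
        (⟨x.2, x.1⟩ : (_ : Node) × Node) ∈
          (addN ℓ D).sigma (fun A => (remN ℓ (insert A D)).erase A) ∧
        (insert x.2 D).erase x.1 = insert x.2 (D.erase x.1) := by
      rintro ⟨B, A⟩ hx
      simp only [Finset.mem_sigma, Finset.mem_erase, mem_remN, mem_addN] at hx ⊢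
      obtain ⟨⟨hB, hDB⟩, hAB, hA, hDA⟩ := hx
      have hA' : A ∉ D := fun h => hA ⟨hAB, h⟩
      have e : (insert A D).erase B = insert A (D.erase B) :=
        Finset.erase_insert_of_ne hAB
      refine ⟨⟨⟨hA', ?_⟩, Ne.symm hAB, Finset.mem_insert_of_mem hB, by rw [e]; exact hDA⟩, e⟩
      have := hD.union hDA
      have e2 : D ∪ insert A (D.erase B) = insert A D := by
        ext x
        simp only [Finset.mem_union, Finset.mem_insert, Finset.mem_erase]
        tauto
      rwa [e2] at this
    calc _ = ∑ x ∈ ((remN ℓ D).sigma fun B => (addN ℓ (D.erase B)).erase B).image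
              (fun x => (⟨x.2, x.1⟩ : (_ : Node) × Node)),
              nTab ℓ k ((insert x.1 D).erase x.2) := by
          rw [Finset.sum_image]
          · refine Finset.sum_congr rfl fun x hx => ?_
            rw [(hspec x hx).2]
          · rintro ⟨a, b⟩ _ ⟨c, d⟩ _ hab
            simp only [Sigma.mk.injEq, heq_eq_eq] at hab
            rw [hab.1, hab.2]
      _ ≤ _ := by
          refine Finset.sum_le_sum_of_subset ?_
          intro y hy
          obtain ⟨x, hx, rfl⟩ := Finset.mem_image.1 hy
          exact (hspec x hx).1
  rw [Finset.sum_congr rfl hstep, Finset.sum_add_distrib, Finset.sum_const, smul_eq_mul]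
  have hcard := card_add_ge hD
  -- the induction
  have hind : ℓ * k * nTab ℓ k D ≤ (remN ℓ D).card * nTab ℓ k D +
      ∑ B ∈ remN ℓ D, ∑ A ∈ (addN ℓ (D.erase B)).erase B, nTab ℓ k (insert A (D.erase B)) := by
    cases k with
    | zero => simp
    | succ k =>
      have h1 : ∀ B ∈ remN ℓ D, ℓ * (k + 1) * nTab ℓ k (D.erase B) ≤ nTab ℓ (k + 1) D +
          ∑ A ∈ (addN ℓ (D.erase B)).erase B, nTab ℓ (k + 1) (insert A (D.erase B)) := by
        intro B hB
        have hB' := mem_remN.1 hB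
        have := nTab_up k (D.erase B) hB'.2 (by rw [Finset.card_erase_of_mem hB'.1, hk]; rfl)
        refine this.trans (le_of_eq ?_)
        have hmem : B ∈ addN ℓ (D.erase B) := by
          rw [mem_addN, Finset.insert_erase hB'.1]
          exact ⟨by simp, hD⟩
        rw [← Finset.add_sum_erase _ _ hmem, Finset.insert_erase hB'.1]
      have h2 := Finset.sum_le_sum h1
      rw [← Finset.mul_sum, Finset.sum_add_distrib, Finset.sum_const, smul_eq_mul] at h2
      exact h2
  calc ℓ * (k + 1) * nTab ℓ k D = ℓ * k * nTab ℓ k D + ℓ * nTab ℓ k D := by ring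
    _ ≤ ((remN ℓ D).card * nTab ℓ k D + ∑ B ∈ remN ℓ D,
          ∑ A ∈ (addN ℓ (D.erase B)).erase B, nTab ℓ k (insert A (D.erase B))) +
          ℓ * nTab ℓ k D := Nat.add_le_add_right hind _
    _ = ((remN ℓ D).card + ℓ) * nTab ℓ k D + ∑ B ∈ remN ℓ D,
          ∑ A ∈ (addN ℓ (D.erase B)).erase B, nTab ℓ k (insert A (D.erase B)) := by ring
    _ ≤ _ := Nat.add_le_add (Nat.mul_le_mul_right _ hcard) hoff

/-- The diagrams with `k` nodes. -/
noncomputable def diags (ℓ : ℕ) : ℕ → Finset (Finset Node)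
  | 0 => {∅}
  | k + 1 => (diags ℓ k).biUnion fun D => (addN ℓ D).image fun A => insert A D

lemma diags_spec {ℓ : ℕ} (k : ℕ) : ∀ D ∈ diags ℓ k, IsD ℓ D ∧ D.card = k := by
  induction k with
  | zero =>
    intro D hD
    rw [diags, Finset.mem_singleton] at hD
    subst hD
    exact ⟨IsD.empty, rfl⟩
  | succ k ih =>
    intro D hD
    rw [diags, Finset.mem_biUnion] at hD
    obtain ⟨E, hE, hD⟩ := hD
    obtain ⟨A, hA, rfl⟩ := Finset.mem_image.1 hD
    have hA' := mem_addN.1 hA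
    exact ⟨hA'.2, by rw [Finset.card_insert_of_notMem hA'.1, (ih E hE).2]⟩

lemma sum_sq {ℓ : ℕ} (k : ℕ) :
    ℓ ^ k * k.factorial ≤ ∑ D ∈ diags ℓ k, nTab ℓ k D * nTab ℓ k D := by
  induction k with
  | zero => simp [diags, nTab]
  | succ k ih =>
    have h1 : ∑ D ∈ diags ℓ k, nTab ℓ k D * ∑ A ∈ addN ℓ D, nTab ℓ (k + 1) (insert A D) ≤
        ∑ D ∈ diags ℓ (k + 1), nTab ℓ (k + 1) D * nTab ℓ (k + 1) D := by
      have e : ∀ D ∈ diags ℓ (k + 1), nTab ℓ (k + 1) D * nTab ℓ (k + 1) D =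
          ∑ A ∈ remN ℓ D, nTab ℓ (k + 1) D * nTab ℓ k (D.erase A) := by
        intro D _
        rw [← Finset.mul_sum]
        rfl
      rw [Finset.sum_congr rfl e]
      simp_rw [Finset.mul_sum]
      rw [Finset.sum_sigma', Finset.sum_sigma']
      calc _ = ∑ x ∈ ((diags ℓ k).sigma fun D => addN ℓ D).image
              (fun x => (⟨insert x.2 x.1, x.2⟩ : (_ : Finset Node) × Node)),
              nTab ℓ (k + 1) x.1 * nTab ℓ k (x.1.erase x.2) := by
            rw [Finset.sum_image]
            · refine Finset.sum_congr rfl fun x hx => ?_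
              simp only [Finset.mem_sigma, mem_addN] at hx
              rw [Finset.erase_insert hx.2.1, mul_comm]
            · rintro ⟨a, b⟩ h1 ⟨c, d⟩ h2 hab
              simp only [Finset.mem_coe, Finset.mem_sigma, mem_addN] at h1 h2
              simp only [Sigma.mk.injEq, heq_eq_eq] at hab
              obtain ⟨h3, rfl⟩ := hab
              have := congrArg (fun s => Finset.erase s b) h3
              simp only [Finset.erase_insert h1.2.1, Finset.erase_insert h2.2.1] at this
              rw [this]
        _ ≤ _ := by
            refine Finset.sum_le_sum_of_subset ?_
            intro y hy
            obtain ⟨x, hx, rfl⟩ := Finset.mem_image.1 hy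
            simp only [Finset.mem_sigma] at hx ⊢
            have hx2 := mem_addN.1 hx.2
            refine ⟨?_, ?_⟩
            · rw [diags, Finset.mem_biUnion]
              exact ⟨x.1, hx.1, Finset.mem_image_of_mem _ hx.2⟩
            · rw [mem_remN, Finset.erase_insert hx2.1]
              exact ⟨Finset.mem_insert_self _ _, (diags_spec k _ hx.1).1⟩
    refine le_trans ?_ h1
    calc ℓ ^ (k + 1) * (k + 1).factorial = ℓ * (k + 1) * (ℓ ^ k * k.factorial) := by
          rw [Nat.factorial_succ, pow_succ]; ring
      _ ≤ ℓ * (k + 1) * ∑ D ∈ diags ℓ k, nTab ℓ k D * nTab ℓ k D := Nat.mul_le_mul_left _ ih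
      _ = ∑ D ∈ diags ℓ k, nTab ℓ k D * (ℓ * (k + 1) * nTab ℓ k D) := by
          rw [Finset.mul_sum]
          exact Finset.sum_congr rfl fun D _ => by ring
      _ ≤ _ := Finset.sum_le_sum fun D hD => Nat.mul_le_mul_left _
          (nTab_up k D (diags_spec k D hD).1 (diags_spec k D hD).2)

end Paper

open scoped BigOperators
open scoped Classical

namespace Paper

/-- Standard tableaux of shape `D`, as entry functions. -/
structure IsTab (k : ℕ) (D : Finset Node) (f : Node → ℕ) : Prop where
  zero : ∀ A, A ∉ D → f A = 0
  bij : Set.BijOn f D (Set.Icc 1 k)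
  row : ∀ l r c, (l, r, c + 1) ∈ D → f (l, r, c) < f (l, r, c + 1)
  col : ∀ l r c, (l, r + 1, c) ∈ D → f (l, r, c) < f (l, r + 1, c)

lemma IsTab.update {ℓ k : ℕ} {D : Finset Node} {A : Node} {f : Node → ℕ} (hD : IsD ℓ D)
    (hA : A ∈ remN ℓ D) (hf : IsTab k (D.erase A) f) :
    IsTab (k + 1) D (Function.update f A (k + 1)) := by
  have hA' := mem_remN.1 hA
  have hle : ∀ B, f B ≤ k := by
    intro B
    by_cases hB : B ∈ D.erase A
    · exact (hf.bij.mapsTo (Finset.mem_coe.2 hB)).2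
    · rw [hf.zero B hB]; omega
  have hmono : ∀ B C : Node, C ∈ D → B ∈ D → B ≠ C →
      (C ∈ D.erase A → B ∈ D.erase A ∧ f B < f C) →
      Function.update f A (k + 1) B < Function.update f A (k + 1) C := by
    intro B C hC hB hBC h
    by_cases hCA : C = A
    · subst hCA
      rw [Function.update_of_ne hBC, Function.update_self]
      exact Nat.lt_succ_of_le (hle B)
    · obtain ⟨h1, h2⟩ := h (Finset.mem_erase.2 ⟨hCA, hC⟩)
      rw [Function.update_of_ne hCA, Function.update_of_ne (Finset.mem_erase.1 h1).1]
      exact h2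
  refine ⟨?_, ⟨?_, ?_, ?_⟩, ?_, ?_⟩
  · intro B hB
    have hBA : B ≠ A := fun h => hB (h ▸ hA'.1)
    rw [Function.update_of_ne hBA]
    exact hf.zero B fun h => hB (Finset.mem_of_mem_erase h)
  · intro B hB
    by_cases hBA : B = A
    · subst hBA
      rw [Function.update_self]
      exact ⟨by omega, le_rfl⟩
    · rw [Function.update_of_ne hBA]
      have := hf.bij.mapsTo (Finset.mem_coe.2 (Finset.mem_erase.2 ⟨hBA, hB⟩))
      exact ⟨this.1, this.2.trans (Nat.le_succ k)⟩
  · intro B hB C hC hBC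
    by_cases hBA : B = A <;> by_cases hCA : C = A
    · rw [hBA, hCA]
    · rw [hBA, Function.update_self, Function.update_of_ne hCA] at hBC
      have := hle C
      omega
    · rw [hCA, Function.update_self, Function.update_of_ne hBA] at hBC
      have := hle B
      omega
    · rw [Function.update_of_ne hBA, Function.update_of_ne hCA] at hBC
      exact hf.bij.injOn (Finset.mem_coe.2 (Finset.mem_erase.2 ⟨hBA, hB⟩))
        (Finset.mem_coe.2 (Finset.mem_erase.2 ⟨hCA, hC⟩)) hBC
  · rintro m ⟨h1, h2⟩
    by_cases hm : m = k + 1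
    · exact ⟨A, Finset.mem_coe.2 hA'.1, by rw [Function.update_self, hm]⟩
    · obtain ⟨B, hB, hBm⟩ := hf.bij.surjOn (⟨h1, by omega⟩ : m ∈ Set.Icc 1 k)
      have hB' := Finset.mem_erase.1 (Finset.mem_coe.1 hB)
      exact ⟨B, Finset.mem_coe.2 hB'.2, by rw [Function.update_of_ne hB'.1, hBm]⟩
  · intro l r c h
    exact hmono _ _ h (hD.2.1 _ _ _ h) (by simp) fun h' =>
      ⟨hA'.2.2.1 _ _ _ h', hf.row _ _ _ h'⟩
  · intro l r c h
    exact hmono _ _ h (hD.2.2 _ _ _ h) (by simp) fun h' =>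
      ⟨hA'.2.2.2 _ _ _ h', hf.col _ _ _ h'⟩

lemma exists_tabs {ℓ : ℕ} (k : ℕ) : ∀ D : Finset Node, IsD ℓ D →
    ∃ S : Finset (Node → ℕ), S.card = nTab ℓ k D ∧ ∀ f ∈ S, IsTab k D f := by
  induction k with
  | zero =>
    intro D _
    by_cases hD : D = ∅
    · refine ⟨{fun _ => 0}, by simp [nTab, hD], ?_⟩
      intro f hf
      rw [Finset.mem_singleton] at hf
      subst hf
      subst hD
      refine ⟨fun _ _ => rfl, ?_, by simp, by simp⟩
      have : Set.Icc 1 0 = (∅ : Set ℕ) := by simp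
      rw [this, Finset.coe_empty]
      exact Set.bijOn_empty _
    · exact ⟨∅, by simp [nTab, hD], by simp⟩
  | succ k ih =>
    intro D hD
    choose S hS1 hS2 using ih
    let G : Node → Finset (Node → ℕ) := fun A =>
      if h : IsD ℓ (D.erase A) then (S _ h).image fun f => Function.update f A (k + 1) else ∅
    have hG : ∀ A ∈ remN ℓ D, ∃ h : IsD ℓ (D.erase A),
        G A = (S _ h).image fun f => Function.update f A (k + 1) := by
      intro A hA
      have h := (mem_remN.1 hA).2
      exact ⟨h, dif_pos h⟩
    have hGt : ∀ A ∈ remN ℓ D, ∀ f ∈ G A, IsTab (k + 1) D f ∧ f A = k + 1 := by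
      intro A hA f hf
      obtain ⟨h, e⟩ := hG A hA
      rw [e] at hf
      obtain ⟨f', hf', rfl⟩ := Finset.mem_image.1 hf
      exact ⟨(hS2 _ h f' hf').update hD hA, Function.update_self _ _ _⟩
    refine ⟨(remN ℓ D).biUnion G, ?_, ?_⟩
    · rw [Finset.card_biUnion, nTab]
      · refine Finset.sum_congr rfl fun A hA => ?_
        obtain ⟨h, e⟩ := hG A hA
        rw [e, ← hS1 _ h]
        refine Finset.card_image_of_injOn ?_
        intro f hf g hg hfg
        have h0 : f A = 0 := (hS2 _ h f hf).zero A (by simp)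
        have h0' : g A = 0 := (hS2 _ h g hg).zero A (by simp)
        funext B
        by_cases hB : B = A
        · rw [hB, h0, h0']
        · have := congrFun hfg B
          simpa [Function.update_of_ne hB] using this
      · intro A hA B hB hAB
        rw [Function.onFun, Finset.disjoint_left]
        intro f hf hf'
        obtain ⟨h1, h2⟩ := hGt A hA f hf
        obtain ⟨_, h4⟩ := hGt B hB f hf'
        exact hAB (h1.bij.injOn (Finset.mem_coe.2 (mem_remN.1 hA).1)
          (Finset.mem_coe.2 (mem_remN.1 hB).1) (h2.trans h4.symm))
    · intro f hf
      obtain ⟨A, hA, hf⟩ := Finset.mem_biUnion.1 hf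
      exact (hGt A hA f hf).1

/-- The multipartition with a given diagram. -/
noncomputable def toMP {ℓ n : ℕ} (D : Finset Node) (hD : IsD ℓ D) (hn : D.card = n) :
    Multipartition ℓ n where
  part := rlen D
  comp_bound l hl r := by
    by_contra h
    have := (mem_iff_rlen hD l r 0).2 (by omega)
    have := hD.1 _ this
    simp only at this
    omega
  antitone l := by
    intro r r' hr
    by_contra h
    have := (mem_iff_rlen hD l r' (rlen D l r)).2 (by omega)
    exact lt_irrefl _ ((mem_iff_rlen hD _ _ _).1 (hD.lower this hr le_rfl))
  row_bound l r hr := by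
    by_contra h
    have := (mem_iff_rlen hD l r 0).2 (by omega)
    have := (hD.bound this).1
    simp only at this
    omega
  size := by
    rw [← Finset.sum_product']
    conv_rhs => rw [← hn]
    rw [Finset.card_eq_sum_card_fiberwise (f := fun A : Node => (A.1, A.2.1))
      (t := Finset.range ℓ ×ˢ Finset.range n)]
    · refine Finset.sum_congr rfl fun x _ => ?_
      rw [rlen]
      congr 1
      ext A
      simp only [Finset.mem_filter, Prod.ext_iff]
    · intro A hA
      have h1 := hD.1 A hA
      have h2 := (hD.bound hA).1
      simp only [Finset.coe_product, Finset.coe_range, Set.mem_prod, Set.mem_Iio]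
      omega

lemma toMP_diagram {ℓ n : ℕ} (D : Finset Node) (hD : IsD ℓ D) (hn : D.card = n) :
    (toMP D hD hn).diagram = (D : Set Node) := by
  ext ⟨l, r, c⟩
  rw [Finset.mem_coe, mem_iff_rlen hD]
  rfl

/-- The tableau with a given entry function. -/
noncomputable def toTab {ℓ n : ℕ} (D : Finset Node) (hD : IsD ℓ D) (hn : D.card = n)
    (f : Node → ℕ) (hf : IsTab n D f) : StdTableau ℓ n where
  shape := toMP D hD hn
  entry := f
  entry_zero A hA := hf.zero A (by rwa [toMP_diagram] at hA)
  bijOn := by rw [toMP_diagram]; exact hf.bij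
  row_inc l r c h := hf.row l r c (by rwa [toMP_diagram] at h)
  col_inc l r c h := hf.col l r c (by rwa [toMP_diagram] at h)

lemma card_shape {ℓ n : ℕ} (D : Finset Node) (hD : IsD ℓ D) (hn : D.card = n) :
    nTab ℓ n D ≤ (Finset.univ.filter fun T : StdTableau ℓ n =>
      T.shape.diagram = (D : Set Node)).card := by
  obtain ⟨S, h1, h2⟩ := exists_tabs n D hD
  rw [← h1, ← Finset.card_attach]
  refine Finset.card_le_card_of_injOn (fun f => toTab D hD hn f.1 (h2 f.1 f.2)) ?_ ?_
  · intro f _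
    simp only [Finset.coe_filter, Finset.mem_univ, true_and, Set.mem_ofPred_eq]
    exact toMP_diagram D hD hn
  · intro f _ g _ hfg
    exact Subtype.ext (congrArg StdTableau.entry hfg)

/-- The number of pairs of standard tableaux of the same shape. -/
lemma card_pairs (ℓ n : ℕ) : ℓ ^ n * n.factorial ≤
    Fintype.card {p : StdTableau ℓ n × StdTableau ℓ n // p.1.shape = p.2.shape} := by
  refine (sum_sq n).trans ?_
  rw [Fintype.card_subtype]
  let X : Finset Node → Finset (StdTableau ℓ n) := fun D =>
    Finset.univ.filter fun T : StdTableau ℓ n => T.shape.diagram = (D : Set Node)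
  have h1 : ∑ D ∈ diags ℓ n, nTab ℓ n D * nTab ℓ n D ≤
      ∑ D ∈ diags ℓ n, (X D ×ˢ X D).card := by
    refine Finset.sum_le_sum fun D hD => ?_
    have := card_shape D (diags_spec n D hD).1 (diags_spec n D hD).2
    rw [Finset.card_product]
    exact Nat.mul_le_mul this this
  refine h1.trans ?_
  rw [← Finset.card_biUnion]
  · refine Finset.card_le_card ?_
    intro p hp
    obtain ⟨D, _, hp⟩ := Finset.mem_biUnion.1 hp
    simp only [X, Finset.mem_product, Finset.mem_filter, Finset.mem_univ, true_and] at hp ⊢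
    exact StdTableau.shape_eq_of_diag (hp.1.trans hp.2.symm)
  · intro D _ E _ hDE
    rw [Function.onFun, Finset.disjoint_left]
    intro p hp hp'
    simp only [X, Finset.mem_product, Finset.mem_filter, Finset.mem_univ, true_and] at hp hp'
    exact hDE (Finset.coe_injective (hp.1.symm.trans hp'.1))

end Paper

open scoped BigOperators
open scoped Classical

namespace Paper

namespace SN

variable {K : Type*} [Field K] {t : Kˣ} {n ℓ : ℕ} {κ : ℕ → ℤ}

lemma matrix_eq (hs : SeparatesF t n ℓ κ) {S T : StdTableau ℓ n} {M : Mat ℓ n K}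
    (h1 : ∀ k : Fin n, ML t κ (k.1 + 1) * M = qint (t : K) (content κ S (k.1 + 1)) • M)
    (h2 : ∀ k : Fin n, M * ML t κ (k.1 + 1) = qint (t : K) (content κ T (k.1 + 1)) • M) :
    M = M S T • Matrix.single S T (1 : K) := by
  have hA : ∀ A B, M A B ≠ 0 → A = S := by
    intro A B hM
    refine StdTableau.weight_inj hs fun k hk1 hk2 => ?_
    have := congrFun (congrFun (h1 ⟨k - 1, by omega⟩) A) B
    simp only [ML, Nat.sub_add_cancel hk1] at this
    rw [Matrix.diagonal_mul, Matrix.smul_apply, smul_eq_mul] at this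
    exact mul_right_cancel₀ hM this
  have hB : ∀ A B, M A B ≠ 0 → B = T := by
    intro A B hM
    refine StdTableau.weight_inj hs fun k hk1 hk2 => ?_
    have := congrFun (congrFun (h2 ⟨k - 1, by omega⟩) A) B
    simp only [ML, Nat.sub_add_cancel hk1] at this
    rw [Matrix.mul_diagonal, Matrix.smul_apply, smul_eq_mul, mul_comm] at this
    exact mul_right_cancel₀ hM this
  ext A B
  rw [Matrix.smul_apply, Matrix.single_apply, smul_eq_mul]
  by_cases h : S = A ∧ T = B
  · rw [if_pos h, mul_one, h.1, h.2]
  · rw [if_neg h, mul_zero]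
    by_contra hM
    exact h ⟨(hA A B hM).symm, (hB A B hM).symm⟩

/-- Pairs of standard tableaux of the same shape. -/
abbrev Prs (ℓ n : ℕ) : Type := {p : StdTableau ℓ n × StdTableau ℓ n // p.1.shape = p.2.shape}

lemma exists_units (hs : SeparatesF t n ℓ κ) (hℓ : 1 ≤ ℓ) :
    ∃ u : Prs ℓ n → CycHecke K t n ℓ κ,
      (∀ p, rep hs (u p) = Matrix.single p.1.1 p.1.2 (1 : K)) ∧ LinearIndependent K u ∧
      Submodule.span K (Set.range u) = ⊤ ∧ Function.Injective (rep hs) := by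
  have h : ∀ p : Prs ℓ n, ∃ x, rep hs x = Matrix.single p.1.1 p.1.2 (1 : K) :=
    fun p => single_mem hs p.2
  choose u hu using h
  obtain ⟨hfin, hrank⟩ := finrank_le (K := K) (t := t) (n := n) (κ := κ) hℓ
  have hli0 : LinearIndependent K fun p : Prs ℓ n =>
      (Matrix.single p.1.1 p.1.2 (1 : K) : Mat ℓ n K) := by
    have := (Matrix.stdBasis K (StdTableau ℓ n) (StdTableau ℓ n)).linearIndependent.comp
      (fun p : Prs ℓ n => p.1) Subtype.val_injective
    convert this using 2 with p
    rw [Function.comp, Matrix.stdBasis_eq_single]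
  have hli1 : LinearIndependent K ((rep hs).toLinearMap ∘ u) := by
    convert hli0 using 2 with p
    exact hu p
  have hli : LinearIndependent K u := LinearIndependent.of_comp _ hli1
  have hcard : Fintype.card (Prs ℓ n) = Module.finrank K (CycHecke K t n ℓ κ) :=
    le_antisymm hli.fintype_card_le_finrank (hrank.trans (card_pairs ℓ n))
  have hspan : Submodule.span K (Set.range u) = ⊤ :=
    hli.span_eq_top_of_card_eq_finrank' hcard
  refine ⟨u, hu, hli, hspan, ?_⟩
  rw [injective_iff_map_eq_zero]
  intro x hx
  have hxm : x ∈ Submodule.span K (Set.range u) := by rw [hspan]; trivial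
  obtain ⟨c, rfl⟩ := (Submodule.mem_span_range_iff_exists_fun K).1 hxm
  rw [map_sum] at hx
  simp only [map_smul] at hx
  have := Fintype.linearIndependent_iff.1 hli1 c hx
  simp [this]

lemma eigSub_eq (hs : SeparatesF t n ℓ κ) (hinj : Function.Injective (rep (K := K) hs))
    (S T : StdTableau ℓ n) (x : CycHecke K t n ℓ κ)
    (hx : rep hs x = Matrix.single S T (1 : K)) :
    eigSub K t n ℓ κ S T = Submodule.span K {x} := by
  apply le_antisymm
  · intro y hy
    have h := matrix_eq hs (S := S) (T := T) (M := rep hs y)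
      (fun k => by rw [← rep_L hs k, ← map_mul, (hy k).1, map_smul])
      (fun k => by rw [← rep_L hs k, ← map_mul, (hy k).2, map_smul])
    rw [Submodule.mem_span_singleton]
    refine ⟨rep hs y S T, hinj ?_⟩
    rw [map_smul, hx, ← h]
  · rw [Submodule.span_le, Set.singleton_subset_iff]
    intro k
    constructor
    · apply hinj
      rw [map_mul, map_smul, rep_L, hx, ML]
      ext A B
      rw [Matrix.diagonal_mul, Matrix.smul_apply, Matrix.single_apply, smul_eq_mul]
      split_ifs with h
      · rw [← h.1]; rfl
      · simp
    · apply hinj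
      rw [map_mul, map_smul, rep_L, hx, ML]
      ext A B
      rw [Matrix.mul_diagonal, Matrix.smul_apply, Matrix.single_apply, smul_eq_mul, mul_comm]
      split_ifs with h
      · rw [← h.2]; rfl
      · simp

end SN

end Paper

namespace Paper

/-- Proposition P:LDecomposition: when `(K, t)` separates
`Std(P_n)`, the cyclotomic Hecke algebra decomposes as the internal direct sum of the
one-dimensional simultaneous two-sided eigenspaces `H_{S,T}`, over pairs of standard
tableaux of the same shape. -/
theorem seminormal_decomposition (n ℓ : ℕ) (hℓ : 1 ≤ ℓ) (κ : ℕ → ℤ)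
    (K : Type) [Field K] (t : Kˣ) (hsep : SeparatesF t n ℓ κ) :
    (⨆ p : {p : StdTableau ℓ n × StdTableau ℓ n // p.1.shape = p.2.shape},
        eigSub K t n ℓ κ p.1.1 p.1.2) = ⊤ ∧
    (∀ p : {p : StdTableau ℓ n × StdTableau ℓ n // p.1.shape = p.2.shape},
      Disjoint (eigSub K t n ℓ κ p.1.1 p.1.2)
        (⨆ q : {q : StdTableau ℓ n × StdTableau ℓ n // q.1.shape = q.2.shape},
          ⨆ _ : q ≠ p, eigSub K t n ℓ κ q.1.1 q.1.2)) ∧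
    (∀ p : {p : StdTableau ℓ n × StdTableau ℓ n // p.1.shape = p.2.shape},
      Module.finrank K (eigSub K t n ℓ κ p.1.1 p.1.2) = 1) := by
  obtain ⟨u, hu, hli, hspan, hinj⟩ := SN.exists_units (K := K) hsep hℓ
  have he : ∀ p : {p : StdTableau ℓ n × StdTableau ℓ n // p.1.shape = p.2.shape},
      eigSub K t n ℓ κ p.1.1 p.1.2 = Submodule.span K {u p} :=
    fun p => SN.eigSub_eq hsep hinj _ _ _ (hu p)
  refine ⟨?_, ?_, ?_⟩
  · simp only [he]
    rw [← Submodule.span_range_eq_iSup, hspan]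
  · intro p
    have := hli.iSupIndep_span_singleton p
    simpa only [he] using this
  · intro p
    rw [he]
    exact finrank_span_singleton (hli.ne_zero p)

end Paper
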